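/- arXiv:2604.22735 — 3 statements merged into one kernel-verified Lean document; each statement's English description precedes it below -/
import Mathlib

section
/- Let X(x₁, x₂, x₃, x₄, x₅) be the 3×3 real matrix with rows (x₁ + x₂ + 1, −x₁, −x₂), (−x₁, x₁ + x₃ + x₅, −x₃), (−x₂, −x₃, x₂ + x₃ + x₄). Then the Lebesgue integral over (x₁, …, x₅) ∈ (0, ∞)⁵ of the function 1/(det X(x₁, …, x₅))² is finite and equals 6 · ζ(3), where ζ(3) = ∑_{n ≥ 1} 1/n³. -/
open MeasureTheory

/-- The graph Laplacian of the wheel with three spokes in the affine chart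
where the sixth edge variable equals 1. -/
noncomputable def wheel3Matrix (x : Fin 5 → ℝ) : Matrix (Fin 3) (Fin 3) ℝ :=
  !![x 0 + x 1 + 1, -(x 0),         -(x 1);
     -(x 0),        x 0 + x 2 + x 4, -(x 2);
     -(x 1),        -(x 2),         x 1 + x 2 + x 3]

/-!
Write `a, b, c` for the rim variables and `d, e` for the two free spokes. The determinant has the
form `(A d + B) e + (C d + D)`, and by Dodgson's identity `B C - A D = Q ^ 2` with
`Q = a b + (1 + a + b) c`, so the spokes integrate out to `log (B C / (A D)) / Q ^ 2`.
The substitutions `c = a b t / (1 + a + b)` and `(a, b) = (x, y) / (1 + t)` make the `t`-integral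
elementary and leave
`∫∫ log (1 + x + y) log ((1 + x) (1 + y) / (1 + x + y)) / (x y (x + y)) dx dy`.
In the coordinates `s = x + y`, `τ = y / x` the `τ`-integral is `log (1 + s) ^ 2`, and what remains,
`∫ log (1 + s) ^ 3 / s ^ 2 ds = 3! ζ(3)`, follows from `s = e ^ y - 1` and the geometric series
in `e ^ (-y)`.
-/

open Set Filter Topology Real
open scoped ENNReal Nat

section Tonelli

lemma lintegral_pi_fin_succ {n : ℕ} {α : Fin (n + 1) → Type*} [∀ i, MeasurableSpace (α i)]
    (μ : ∀ i, Measure (α i)) [∀ i, SigmaFinite (μ i)] {f : (∀ i, α i) → ℝ≥0∞}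
    (hf : Measurable f) :
    ∫⁻ x, f x ∂Measure.pi μ =
      ∫⁻ t, ∫⁻ y, f (Fin.cons t y) ∂Measure.pi (fun i => μ i.succ) ∂μ 0 := by
  have h := (measurePreserving_piFinSuccAbove μ 0).symm
  rw [← h.lintegral_comp hf]
  refine (lintegral_prod _ (hf.comp h.measurable).aemeasurable).trans ?_
  simp only [MeasurableEquiv.piFinSuccAbove_symm_apply, Fin.insertNthEquiv_zero]
  rfl

lemma measurable_fin_cons {n : ℕ} {α : Fin (n + 1) → Type*} [∀ i, MeasurableSpace (α i)]
    (t : α 0) : Measurable fun y : ∀ i : Fin n, α i.succ => (Fin.cons t y : ∀ i, α i) :=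
  measurable_pi_iff.2 <| Fin.cases (by simp) fun i => by simpa using measurable_pi_apply i

lemma lintegral_pi_fin_five {α : Type*} [MeasurableSpace α] (μ : Measure α) [SigmaFinite μ]
    {f : (Fin 5 → α) → ℝ≥0∞} (hf : Measurable f) :
    ∫⁻ x, f x ∂Measure.pi (fun _ => μ) =
      ∫⁻ a, ∫⁻ b, ∫⁻ c, ∫⁻ d, ∫⁻ e, f ![a, b, c, d, e] ∂μ ∂μ ∂μ ∂μ ∂μ := by
  refine (lintegral_pi_fin_succ _ hf).trans <| lintegral_congr fun a => ?_
  have ha := hf.comp (measurable_fin_cons a)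
  refine (lintegral_pi_fin_succ _ ha).trans <| lintegral_congr fun b => ?_
  have hb := ha.comp (measurable_fin_cons b)
  refine (lintegral_pi_fin_succ _ hb).trans <| lintegral_congr fun c => ?_
  have hc := hb.comp (measurable_fin_cons c)
  refine (lintegral_pi_fin_succ _ hc).trans <| lintegral_congr fun d => ?_
  have hd := hc.comp (measurable_fin_cons d)
  refine (lintegral_pi_fin_succ _ hd).trans <| lintegral_congr fun e => ?_
  rw [Measure.pi_of_empty, lintegral_dirac]
  rfl

lemma lintegral_lintegral_lintegral_rotate {α β γ : Type*} [MeasurableSpace α]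
    [MeasurableSpace β] [MeasurableSpace γ] (μ : Measure α) (ν : Measure β) (ρ : Measure γ)
    [SFinite μ] [SFinite ν] [SFinite ρ] {f : α → β → γ → ℝ≥0∞}
    (hf : Measurable fun p : α × β × γ => f p.1 p.2.1 p.2.2) :
    ∫⁻ a, ∫⁻ b, ∫⁻ c, f a b c ∂ρ ∂ν ∂μ = ∫⁻ c, ∫⁻ a, ∫⁻ b, f a b c ∂ν ∂μ ∂ρ := by
  have hswap (a : α) : ∫⁻ b, ∫⁻ c, f a b c ∂ρ ∂ν = ∫⁻ c, ∫⁻ b, f a b c ∂ν ∂ρ :=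
    lintegral_lintegral_swap (hf.comp measurable_prodMk_left).aemeasurable
  simp only [hswap]
  refine lintegral_lintegral_swap (Measurable.aemeasurable ?_)
  exact (hf.comp (f := fun p : (α × γ) × β => (p.1.1, p.2, p.1.2))
    (by fun_prop)).lintegral_prod_right'

lemma volume_restrict_forall_pos {ι : Type*} [Fintype ι] :
    (volume : Measure (ι → ℝ)).restrict {x | ∀ i, 0 < x i} =
      Measure.pi fun _ => volume.restrict (Ioi 0) := by
  rw [show {x : ι → ℝ | ∀ i, 0 < x i} = univ.pi fun _ => Ioi 0 by ext; simp, volume_pi,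
    Measure.restrict_pi_pi]

lemma integrable_and_integral_eq_of_lintegral_ofReal_eq {α : Type*} [MeasurableSpace α]
    {μ : Measure α} {f : α → ℝ} {c : ℝ} (hfm : AEStronglyMeasurable f μ) (hf : 0 ≤ᵐ[μ] f)
    (hc : 0 ≤ c) (h : ∫⁻ x, ENNReal.ofReal (f x) ∂μ = ENNReal.ofReal c) :
    Integrable f μ ∧ ∫ x, f x ∂μ = c := by
  refine ⟨(lintegral_ofReal_ne_top_iff_integrable hfm hf).1 (h ▸ ENNReal.ofReal_ne_top), ?_⟩
  rw [integral_eq_lintegral_of_nonneg_ae hf hfm, h, ENNReal.toReal_ofReal hc]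

end Tonelli

section ChangeOfVariables

lemma lintegral_Ioi_comp_mul_left {k : ℝ} (hk : 0 < k) (f : ℝ → ℝ≥0∞) :
    ∫⁻ x in Ioi 0, f x = ∫⁻ x in Ioi 0, ENNReal.ofReal k * f (k * x) := by
  have h := lintegral_image_eq_lintegral_abs_deriv_mul (s := Ioi (0 : ℝ)) (f := (k * ·))
    measurableSet_Ioi (fun x _ => (hasDerivAt_const_mul k).hasDerivWithinAt)
    (mul_right_injective₀ hk.ne').injOn f
  rwa [image_mul_left_Ioi hk, mul_zero, abs_of_pos hk] at h

lemma lintegral_Ioi_comp_exp_sub_one (f : ℝ → ℝ≥0∞) :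
    ∫⁻ s in Ioi 0, f s = ∫⁻ y in Ioi 0, ENNReal.ofReal (exp y) * f (exp y - 1) := by
  have himage : (exp · - 1) '' Ioi 0 = Ioi 0 := by
    rw [← image_image (· - 1) exp, image_exp_Ioi, image_sub_const_Ioi, exp_zero, sub_self]
  have h := lintegral_image_eq_lintegral_deriv_mul_of_monotoneOn (s := Ioi (0 : ℝ))
    measurableSet_Ioi (fun y _ => ((hasDerivAt_exp y).sub_const 1).hasDerivWithinAt)
    (fun x _ y _ hxy => sub_le_sub_right (exp_le_exp.2 hxy) 1) f
  rwa [himage] at h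

lemma lintegral_Ioi_Ioi_comp_mul {α : Type*} [MeasurableSpace α] (ν : Measure α) [SFinite ν]
    {f : ℝ → ℝ → α → ℝ≥0∞} (hf : Measurable fun p : ℝ × ℝ × α => f p.1 p.2.1 p.2.2)
    {k : α → ℝ} (hk : Measurable k) (hpos : ∀ᵐ t ∂ν, 0 < k t) :
    ∫⁻ a in Ioi 0, ∫⁻ b in Ioi 0, ∫⁻ t, f a b t ∂ν =
      ∫⁻ x in Ioi 0, ∫⁻ y in Ioi 0, ∫⁻ t,
        ENNReal.ofReal (k t ^ 2) * f (k t * x) (k t * y) t ∂ν := by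
  have hg : Measurable fun p : ℝ × ℝ × α =>
      ENNReal.ofReal (k p.2.2 ^ 2) * f (k p.2.2 * p.1) (k p.2.2 * p.2.1) p.2.2 :=
    (by fun_prop : Measurable fun p : ℝ × ℝ × α => ENNReal.ofReal (k p.2.2 ^ 2)).mul
      (hf.comp (f := fun p : ℝ × ℝ × α => (k p.2.2 * p.1, k p.2.2 * p.2.1, p.2.2)) (by fun_prop))
  refine (lintegral_lintegral_lintegral_rotate _ _ _ hf).trans <|
    (lintegral_congr_ae ?_).trans (lintegral_lintegral_lintegral_rotate _ _ _ hg).symm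
  filter_upwards [hpos] with t ht
  rw [lintegral_Ioi_comp_mul_left ht]
  refine lintegral_congr fun x => ?_
  rw [lintegral_Ioi_comp_mul_left ht, ← lintegral_const_mul' _ _ ENNReal.ofReal_ne_top]
  simp only [← mul_assoc, ← ENNReal.ofReal_mul ht.le, sq]

lemma lintegral_Ioi_Ioi_eq_lintegral_add_div {f : ℝ → ℝ → ℝ≥0∞}
    (hf : Measurable (Function.uncurry f)) :
    ∫⁻ x in Ioi 0, ∫⁻ y in Ioi 0, f x y =
      ∫⁻ s in Ioi 0, ∫⁻ τ in Ioi 0,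
        ENNReal.ofReal (s / (1 + τ) ^ 2) * f (s / (1 + τ)) (s * τ / (1 + τ)) := by
  calc ∫⁻ x in Ioi 0, ∫⁻ y in Ioi 0, f x y
      = ∫⁻ x in Ioi 0, ∫⁻ τ in Ioi 0, ENNReal.ofReal x * f x (x * τ) :=
        setLIntegral_congr_fun measurableSet_Ioi fun x hx => lintegral_Ioi_comp_mul_left hx _
    _ = ∫⁻ τ in Ioi 0, ∫⁻ x in Ioi 0, ENNReal.ofReal x * f x (x * τ) :=
        lintegral_lintegral_swap (by fun_prop)
    _ = ∫⁻ τ in Ioi 0, ∫⁻ s in Ioi 0,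
          ENNReal.ofReal (s / (1 + τ) ^ 2) * f (s / (1 + τ)) (s * τ / (1 + τ)) := by
        refine setLIntegral_congr_fun measurableSet_Ioi fun τ (hτ : 0 < τ) => ?_
        have hk : 0 < (1 + τ)⁻¹ := by positivity
        simp only [lintegral_Ioi_comp_mul_left hk (fun x => ENNReal.ofReal x * f x (x * τ)),
          ← mul_assoc (ENNReal.ofReal _), ← ENNReal.ofReal_mul hk.le, inv_mul_eq_div,
          div_mul_eq_mul_div, div_div, ← sq]
    _ = _ := lintegral_lintegral_swap (by fun_prop)

end ChangeOfVariables

section ElementaryIntegrals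

lemma lintegral_Ioi_ofReal_of_hasDerivAt {F f : ℝ → ℝ} {a l : ℝ}
    (hF : ∀ x ∈ Ici a, HasDerivAt F (f x) x) (hf : ∀ x ∈ Ioi a, 0 ≤ f x)
    (hl : Tendsto F atTop (𝓝 l)) :
    ∫⁻ x in Ioi a, ENNReal.ofReal (f x) = ENNReal.ofReal (l - F a) := by
  rw [← integral_Ioi_of_hasDerivAt_of_nonneg' hF hf hl, ofReal_integral_eq_lintegral_ofReal
    (integrableOn_Ioi_deriv_of_nonneg' hF hf hl) (ae_restrict_of_forall_mem measurableSet_Ioi hf)]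

lemma lintegral_Ioc_ofReal_of_hasDerivAt {F f : ℝ → ℝ} {a b : ℝ} (hab : a ≤ b)
    (hF : ∀ x ∈ Icc a b, HasDerivAt F (f x) x) (hf : ∀ x ∈ Ioc a b, 0 ≤ f x) :
    ∫⁻ x in Ioc a b, ENNReal.ofReal (f x) = ENNReal.ofReal (F b - F a) := by
  have hint : IntegrableOn f (Ioc a b) :=
    intervalIntegral.integrableOn_deriv_of_nonneg (HasDerivAt.continuousOn hF)
      (fun x hx => hF x (Ioo_subset_Icc_self hx)) fun x hx => hf x (Ioo_subset_Ioc_self hx)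
  rw [← intervalIntegral.integral_eq_sub_of_hasDerivAt (by rwa [uIcc_of_le hab])
      ((intervalIntegrable_iff_integrableOn_Ioc_of_le hab).2 hint),
    intervalIntegral.integral_of_le hab, ofReal_integral_eq_lintegral_ofReal hint
      (ae_restrict_of_forall_mem measurableSet_Ioc hf)]

lemma lintegral_Ioi_inv_linear_sq {A B : ℝ} (hA : 0 < A) (hB : 0 < B) :
    ∫⁻ x in Ioi 0, ENNReal.ofReal ((A * x + B)⁻¹ ^ 2) = ENNReal.ofReal (1 / (A * B)) := by
  rw [lintegral_Ioi_ofReal_of_hasDerivAt (F := fun x => -(A * (A * x + B))⁻¹) (l := 0)]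
  · simp
  · intro x (hx : 0 ≤ x)
    have h : HasDerivAt (fun x => A * (A * x + B)) (A * A) x :=
      ((hasDerivAt_const_mul A).add_const B).const_mul A
    convert! (h.inv (by positivity)).neg using 1
    field_simp
  · exact fun x _ => by positivity
  · have h : Tendsto (fun x => A * (A * x + B)) atTop atTop :=
      (tendsto_atTop_add_const_right _ B (tendsto_id.const_mul_atTop hA)).const_mul_atTop hA
    simpa using h.inv_tendsto_atTop.neg

lemma tendsto_linear_div_linear_atTop {α : ℝ} (β γ δ : ℝ) (hα : α ≠ 0) :
    Tendsto (fun x => (γ * x + δ) / (α * x + β)) atTop (𝓝 (γ / α)) := by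
  have h : Tendsto (fun x : ℝ => (γ + δ * x⁻¹) / (α + β * x⁻¹)) atTop
      (𝓝 ((γ + δ * 0) / (α + β * 0))) :=
    ((tendsto_inv_atTop_zero.const_mul δ).const_add γ).div
      ((tendsto_inv_atTop_zero.const_mul β).const_add α) (by simpa using hα)
  simp only [mul_zero, add_zero] at h
  refine h.congr' ?_
  filter_upwards [eventually_gt_atTop 0] with x hx
  field_simp

lemma lintegral_Ioi_inv_linear_mul_linear {α β γ δ : ℝ} (hα : 0 < α) (hβ : 0 < β) (hγ : 0 < γ)
    (hδ : 0 < δ) (h : β * γ ≠ α * δ) :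
    ∫⁻ x in Ioi 0, ENNReal.ofReal (1 / ((α * x + β) * (γ * x + δ))) =
      ENNReal.ofReal (log (β * γ / (α * δ)) / (β * γ - α * δ)) := by
  have hD : β * γ - α * δ ≠ 0 := sub_ne_zero.2 h
  rw [lintegral_Ioi_ofReal_of_hasDerivAt (l := log (γ / α) / (β * γ - α * δ))
    (F := fun x => log ((γ * x + δ) / (α * x + β)) / (β * γ - α * δ))]
  · simp only [mul_zero, zero_add]
    rw [← sub_div, ← log_div (by positivity) (by positivity)]
    congr 3
    field_simp
  · intro x (hx : 0 ≤ x)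
    have h₁ : HasDerivAt (fun x => γ * x + δ) γ x := (hasDerivAt_const_mul γ).add_const δ
    have h₂ : HasDerivAt (fun x => α * x + β) α x := (hasDerivAt_const_mul α).add_const β
    have p₁ : 0 < γ * x + δ := by positivity
    have p₂ : 0 < α * x + β := by positivity
    convert! ((h₁.div h₂ p₂.ne').log (div_pos p₁ p₂).ne').div_const (β * γ - α * δ) using 1
    simp only [Pi.div_apply]
    field_simp
    ring
  · exact fun x (hx : 0 < x) => by positivity
  · exact ((tendsto_linear_div_linear_atTop β γ δ hα.ne').log (by positivity)).div_const _

lemma lintegral_Ioi_Ioi_inv_bilinear_sq {A B C D : ℝ} (hA : 0 < A) (hB : 0 < B) (hC : 0 < C)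
    (hD : 0 < D) (h : B * C ≠ A * D) :
    ∫⁻ x in Ioi 0, ∫⁻ y in Ioi 0, ENNReal.ofReal (((A * x + B) * y + (C * x + D))⁻¹ ^ 2) =
      ENNReal.ofReal (log (B * C / (A * D)) / (B * C - A * D)) := by
  rw [← lintegral_Ioi_inv_linear_mul_linear hA hB hC hD h]
  exact setLIntegral_congr_fun measurableSet_Ioi fun x (hx : 0 < x) =>
    lintegral_Ioi_inv_linear_sq (by positivity) (by positivity)

lemma lintegral_Ioi_pow_mul_exp_neg_mul (k : ℕ) {r : ℝ} (hr : 0 < r) :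
    ∫⁻ t in Ioi 0, ENNReal.ofReal (t ^ k * exp (-(r * t))) =
      ENNReal.ofReal (k ! / r ^ (k + 1)) := by
  have hΓ : ∫ t in Ioi 0, t ^ k * exp (-(r * t)) = k ! / r ^ (k + 1) := by
    have h := integral_rpow_mul_exp_neg_mul_Ioi (a := k + 1) (by positivity) hr
    rw [Gamma_nat_eq_factorial] at h
    simp only [add_sub_cancel_right, rpow_natCast] at h
    rw [h, ← Nat.cast_add_one, rpow_natCast, one_div_pow, one_div_mul_eq_div]
  rw [← hΓ, ofReal_integral_eq_lintegral_ofReal (.of_integral_ne_zero (by rw [hΓ]; positivity))]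
  exact ae_restrict_of_forall_mem measurableSet_Ioi fun t (ht : 0 < t) => by positivity

end ElementaryIntegrals

section LogarithmicIntegrals

lemma hasSum_mul_exp_neg_mul {y : ℝ} (hy : 0 < y) :
    HasSum (fun n : ℕ => ((n : ℝ) + 1) * exp (-((n + 1) * y))) (exp y / (exp y - 1) ^ 2) := by
  have h := hasSum_coe_mul_geometric_of_norm_lt_one (r := exp (-y)) (by simpa using hy)
  have hy' : exp y - 1 ≠ 0 := (sub_pos.2 (one_lt_exp_iff.2 hy)).ne'
  have hval : exp (-y) / (1 - exp (-y)) ^ 2 = exp y / (exp y - 1) ^ 2 := by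
    rw [exp_neg]
    field_simp
  rw [hval, ← hasSum_nat_add_iff' 1] at h
  simpa [← exp_nat_mul] using h

lemma lintegral_pow_mul_exp_div_exp_sub_one_sq (k : ℕ) :
    ∫⁻ y in Ioi 0, ENNReal.ofReal (y ^ k * (exp y / (exp y - 1) ^ 2)) =
      ∑' n : ℕ, ENNReal.ofReal (k ! / ((n : ℝ) + 1) ^ k) := by
  have hexpand : ∀ y ∈ Ioi (0 : ℝ), ENNReal.ofReal (y ^ k * (exp y / (exp y - 1) ^ 2)) =
      ∑' n : ℕ, ENNReal.ofReal ((n : ℝ) + 1) * ENNReal.ofReal (y ^ k * exp (-((n + 1) * y))) := by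
    intro y (hy : 0 < y)
    have h := (hasSum_mul_exp_neg_mul hy).mul_left (y ^ k)
    rw [← h.tsum_eq, ENNReal.ofReal_tsum_of_nonneg (fun n => by positivity) h.summable]
    refine tsum_congr fun n => ?_
    rw [← ENNReal.ofReal_mul (by positivity), mul_left_comm]
  rw [setLIntegral_congr_fun measurableSet_Ioi hexpand, lintegral_tsum (fun n => by fun_prop)]
  refine tsum_congr fun n => ?_
  rw [lintegral_const_mul' _ _ ENNReal.ofReal_ne_top,
    lintegral_Ioi_pow_mul_exp_neg_mul k (by positivity), ← ENNReal.ofReal_mul (by positivity)]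
  congr 1
  field_simp
  ring

lemma lintegral_log_one_add_pow_div_sq (k : ℕ) :
    ∫⁻ s in Ioi 0, ENNReal.ofReal (log (1 + s) ^ k / s ^ 2) =
      ∑' n : ℕ, ENNReal.ofReal (k ! / ((n : ℝ) + 1) ^ k) := by
  rw [lintegral_Ioi_comp_exp_sub_one, ← lintegral_pow_mul_exp_div_exp_sub_one_sq]
  refine lintegral_congr fun y => ?_
  rw [← ENNReal.ofReal_mul (exp_pos y).le, add_sub_cancel, log_exp]
  congr 1
  ring

lemma hasDerivAt_log_one_add_mul_div {r t : ℝ} (hr : 0 < r) (ht : 0 < t) :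
    HasDerivAt (fun r => log (1 + (r - 1) ^ 2 * t / (r * (1 + t) ^ 2)) / t)
      ((r ^ 2 - 1) / r * (1 / ((t + r) * (r * t + 1)))) r := by
  have hnum : HasDerivAt (fun r : ℝ => (r - 1) ^ 2 * t) (2 * (r - 1) * t) r := by
    simpa using (((hasDerivAt_id r).sub_const 1).pow 2).mul_const t
  have hden : HasDerivAt (fun r : ℝ => r * (1 + t) ^ 2) ((1 + t) ^ 2) r :=
    hasDerivAt_mul_const _
  have harg : 1 + (r - 1) ^ 2 * t / (r * (1 + t) ^ 2) ≠ 0 := by positivity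
  convert! (((hnum.div hden (by positivity)).const_add 1).log harg).div_const t using 1
  have hsum : r * (1 + t) ^ 2 + (r - 1) ^ 2 * t ≠ 0 := by positivity
  simp only [Pi.div_apply]
  field_simp [hsum]
  ring

/-- Both sides vanish at `q = 1` and have `q`-derivative `2 log q / q`; Tonelli replaces
differentiation under the integral sign. -/
lemma lintegral_Ioi_log_one_add_mul_div {q : ℝ} (hq : 1 ≤ q) :
    ∫⁻ t in Ioi 0, ENNReal.ofReal (log (1 + (q - 1) ^ 2 * t / (q * (1 + t) ^ 2)) / t) =
      ENNReal.ofReal (log q ^ 2) := by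
  calc ∫⁻ t in Ioi 0, ENNReal.ofReal (log (1 + (q - 1) ^ 2 * t / (q * (1 + t) ^ 2)) / t)
      = ∫⁻ t in Ioi 0, ∫⁻ r in Ioc 1 q,
          ENNReal.ofReal ((r ^ 2 - 1) / r * (1 / ((t + r) * (r * t + 1)))) := by
        refine setLIntegral_congr_fun measurableSet_Ioi fun t (ht : 0 < t) => ?_
        rw [lintegral_Ioc_ofReal_of_hasDerivAt hq fun r hr =>
          hasDerivAt_log_one_add_mul_div (one_pos.trans_le hr.1) ht]
        · simp
        · rintro r ⟨hr, -⟩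
          have : 0 < r ^ 2 - 1 := by nlinarith
          positivity
    _ = ∫⁻ r in Ioc 1 q, ∫⁻ t in Ioi 0,
          ENNReal.ofReal ((r ^ 2 - 1) / r * (1 / ((t + r) * (r * t + 1)))) :=
        lintegral_lintegral_swap (by fun_prop)
    _ = ∫⁻ r in Ioc 1 q, ENNReal.ofReal (2 * log r * r⁻¹) := by
        refine setLIntegral_congr_fun measurableSet_Ioc fun r ⟨hr, _⟩ => ?_
        have hr₀ : 0 < r := one_pos.trans hr
        have hr₁ : 0 < r ^ 2 - 1 := by nlinarith
        have hc : 0 ≤ (r ^ 2 - 1) / r := by positivity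
        have hinner := lintegral_Ioi_inv_linear_mul_linear one_pos hr₀ hr₀ one_pos (by nlinarith)
        simp only [one_mul, div_one, ← pow_two r, log_pow, Nat.cast_ofNat] at hinner
        simp only [ENNReal.ofReal_mul hc]
        rw [lintegral_const_mul' _ _ ENNReal.ofReal_ne_top, hinner, ← ENNReal.ofReal_mul hc]
        congr 1
        field_simp
    _ = ENNReal.ofReal (log q ^ 2) := by
        rw [lintegral_Ioc_ofReal_of_hasDerivAt (F := fun r => log r ^ 2) hq]
        · simp
        · intro r hr
          simpa using (hasDerivAt_log (one_pos.trans_le hr.1).ne').fun_pow 2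
        · intro r hr
          have := log_nonneg hr.1.le
          have := one_pos.trans hr.1
          positivity

end LogarithmicIntegrals

section Wheel

lemma det_wheel3Matrix (a b c d e : ℝ) :
    (wheel3Matrix ![a, b, c, d, e]).det =
      ((1 + a + b) * d + (b + c + (a * b + c * (a + b)))) * e +
        ((a + c + (a * b + c * (a + b))) * d + (a * b + c * (a + b))) := by
  simp only [wheel3Matrix, Matrix.det_fin_three, Matrix.of_apply, Matrix.cons_val', Matrix.cons_val]
  ring

lemma measurable_det_wheel3Matrix : Measurable fun x => (wheel3Matrix x).det := by
  simp only [wheel3Matrix, Matrix.det_fin_three, Matrix.of_apply, Matrix.cons_val', Matrix.cons_val]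
  fun_prop

/-- The integral of the inverse squared determinant over the two spoke variables, as a function of
the rim variables. -/
noncomputable def spokeIntegral (a b c : ℝ) : ℝ :=
  log (1 + (a * b + (1 + a + b) * c) ^ 2 / ((1 + a + b) * (a * b + c * (a + b)))) /
    (a * b + (1 + a + b) * c) ^ 2

/-- The density in `(a, b, t)` to which `spokeIntegral` is carried by the substitution
`c = a * b * t / (1 + a + b)`. -/
noncomputable def rimDensity (a b t : ℝ) : ℝ :=
  log (1 + a * b * (1 + t) ^ 2 / (1 + a * (1 + t) + b * (1 + t))) /
    (a * b * (1 + a + b) * (1 + t) ^ 2)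

/-- The density in `(x, y)` left after integrating `rimDensity` over `t` along
`(a, b) = (x, y) / (1 + t)`. It is
`log (1 + x + y) * log ((1 + x) * (1 + y) / (1 + x + y)) / (x * y * (x + y))`. -/
noncomputable def planarDensity (x y : ℝ) : ℝ :=
  log (1 + x + y) / (x + y) * (log (1 + x * y / (1 + x + y)) / (x * y))

lemma lintegral_inv_det_sq_eq_spokeIntegral {a b c : ℝ} (ha : 0 < a) (hb : 0 < b) (hc : 0 < c) :
    ∫⁻ d in Ioi 0, ∫⁻ e in Ioi 0, ENNReal.ofReal ((wheel3Matrix ![a, b, c, d, e]).det⁻¹ ^ 2) =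
      ENNReal.ofReal (spokeIntegral a b c) := by
  have hdodgson : (b + c + (a * b + c * (a + b))) * (a + c + (a * b + c * (a + b))) =
      (1 + a + b) * (a * b + c * (a + b)) + (a * b + (1 + a + b) * c) ^ 2 := by ring
  have hne : (1 + a + b) * (a * b + c * (a + b)) ≠ 0 := by positivity
  have hsq : (a * b + (1 + a + b) * c) ^ 2 ≠ 0 := by positivity
  simp only [det_wheel3Matrix, spokeIntegral]
  rw [lintegral_Ioi_Ioi_inv_bilinear_sq (by positivity) (by positivity) (by positivity)
    (by positivity) (by simpa [hdodgson] using hsq), hdodgson, add_div, div_self hne,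
    add_sub_cancel_left]

lemma lintegral_spokeIntegral {a b : ℝ} (ha : 0 < a) (hb : 0 < b) :
    ∫⁻ c in Ioi 0, ENNReal.ofReal (spokeIntegral a b c) =
      ∫⁻ t in Ioi 0, ENNReal.ofReal (rimDensity a b t) := by
  have hk : 0 < a * b / (1 + a + b) := by positivity
  rw [lintegral_Ioi_comp_mul_left hk]
  refine setLIntegral_congr_fun measurableSet_Ioi fun t (ht : 0 < t) => ?_
  have hroot : a * b + (1 + a + b) * (a * b / (1 + a + b) * t) = a * b * (1 + t) := by
    field_simp
  have hprod : (1 + a + b) * (a * b + a * b / (1 + a + b) * t * (a + b)) =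
      a * b * (1 + a * (1 + t) + b * (1 + t)) := by
    field_simp
    ring
  have harg : (a * b * (1 + t)) ^ 2 / (a * b * (1 + a * (1 + t) + b * (1 + t))) =
      a * b * (1 + t) ^ 2 / (1 + a * (1 + t) + b * (1 + t)) := by
    field_simp
  rw [← ENNReal.ofReal_mul hk.le, spokeIntegral, rimDensity, hroot, hprod, harg]
  congr 1
  field_simp

lemma sq_mul_rimDensity {x y t : ℝ} (hx : 0 < x) (hy : 0 < y) (ht : 0 < t) :
    (1 + t)⁻¹ ^ 2 * rimDensity ((1 + t)⁻¹ * x) ((1 + t)⁻¹ * y) t =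
      log (1 + x * y / (1 + x + y)) / (x * y) * (1 / ((t + (1 + x + y)) * (t + 1))) := by
  have hx' : (1 + t)⁻¹ * x * (1 + t) = x := by field_simp
  have hy' : (1 + t)⁻¹ * y * (1 + t) = y := by field_simp
  have hxy : (1 + t)⁻¹ * x * ((1 + t)⁻¹ * y) * (1 + t) ^ 2 = x * y := by field_simp
  rw [rimDensity, hx', hy', hxy]
  field_simp
  ring

lemma lintegral_sq_mul_rimDensity {x y : ℝ} (hx : 0 < x) (hy : 0 < y) :
    ∫⁻ t in Ioi 0, ENNReal.ofReal ((1 + t)⁻¹ ^ 2) *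
        ENNReal.ofReal (rimDensity ((1 + t)⁻¹ * x) ((1 + t)⁻¹ * y) t) =
      ENNReal.ofReal (planarDensity x y) := by
  have hlog : 0 ≤ log (1 + x * y / (1 + x + y)) / (x * y) :=
    div_nonneg (log_nonneg (le_add_of_nonneg_right (by positivity))) (by positivity)
  have hsplit : ∀ t ∈ Ioi (0 : ℝ), ENNReal.ofReal ((1 + t)⁻¹ ^ 2) *
        ENNReal.ofReal (rimDensity ((1 + t)⁻¹ * x) ((1 + t)⁻¹ * y) t) =
      ENNReal.ofReal (log (1 + x * y / (1 + x + y)) / (x * y)) *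
        ENNReal.ofReal (1 / ((t + (1 + x + y)) * (t + 1))) := fun t ht => by
    rw [← ENNReal.ofReal_mul (sq_nonneg _), ← ENNReal.ofReal_mul hlog, sq_mul_rimDensity hx hy ht]
  have hinner := lintegral_Ioi_inv_linear_mul_linear one_pos (by positivity : 0 < 1 + x + y)
    one_pos one_pos (by linarith)
  simp only [one_mul, mul_one, div_one, add_assoc, add_sub_cancel_left] at hinner
  rw [setLIntegral_congr_fun measurableSet_Ioi hsplit,
    lintegral_const_mul' _ _ ENNReal.ofReal_ne_top, planarDensity, mul_comm (log _ / _),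
    ENNReal.ofReal_mul hlog]
  simp only [add_assoc, hinner]

lemma lintegral_inv_det_sq_eq_planarDensity :
    ∫⁻ x in {x : Fin 5 → ℝ | ∀ i, 0 < x i}, ENNReal.ofReal ((wheel3Matrix x).det⁻¹ ^ 2) =
      ∫⁻ x in Ioi 0, ∫⁻ y in Ioi 0, ENNReal.ofReal (planarDensity x y) := by
  calc ∫⁻ x in {x : Fin 5 → ℝ | ∀ i, 0 < x i}, ENNReal.ofReal ((wheel3Matrix x).det⁻¹ ^ 2)
      = ∫⁻ a in Ioi 0, ∫⁻ b in Ioi 0, ∫⁻ c in Ioi 0, ∫⁻ d in Ioi 0, ∫⁻ e in Ioi 0,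
          ENNReal.ofReal ((wheel3Matrix ![a, b, c, d, e]).det⁻¹ ^ 2) := by
        rw [volume_restrict_forall_pos]
        exact lintegral_pi_fin_five _
          (measurable_det_wheel3Matrix.inv.pow_const 2).ennreal_ofReal
    _ = ∫⁻ a in Ioi 0, ∫⁻ b in Ioi 0, ∫⁻ c in Ioi 0, ENNReal.ofReal (spokeIntegral a b c) :=
        setLIntegral_congr_fun measurableSet_Ioi fun a ha =>
          setLIntegral_congr_fun measurableSet_Ioi fun b hb =>
            setLIntegral_congr_fun measurableSet_Ioi fun c hc =>
              lintegral_inv_det_sq_eq_spokeIntegral ha hb hc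
    _ = ∫⁻ a in Ioi 0, ∫⁻ b in Ioi 0, ∫⁻ t in Ioi 0, ENNReal.ofReal (rimDensity a b t) :=
        setLIntegral_congr_fun measurableSet_Ioi fun a ha =>
          setLIntegral_congr_fun measurableSet_Ioi fun b hb => lintegral_spokeIntegral ha hb
    _ = ∫⁻ x in Ioi 0, ∫⁻ y in Ioi 0, ∫⁻ t in Ioi 0, ENNReal.ofReal ((1 + t)⁻¹ ^ 2) *
          ENNReal.ofReal (rimDensity ((1 + t)⁻¹ * x) ((1 + t)⁻¹ * y) t) :=
        lintegral_Ioi_Ioi_comp_mul _ (by unfold rimDensity; fun_prop) (by fun_prop)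
          (ae_restrict_of_forall_mem measurableSet_Ioi fun t (ht : 0 < t) => by positivity)
    _ = ∫⁻ x in Ioi 0, ∫⁻ y in Ioi 0, ENNReal.ofReal (planarDensity x y) :=
        setLIntegral_congr_fun measurableSet_Ioi fun x hx =>
          setLIntegral_congr_fun measurableSet_Ioi fun y hy => lintegral_sq_mul_rimDensity hx hy

lemma mul_planarDensity_eq_mul_div {s τ : ℝ} (hs : 0 < s) (hτ : 0 < τ) :
    s / (1 + τ) ^ 2 * planarDensity (s / (1 + τ)) (s * τ / (1 + τ)) =
      log (1 + s) / s ^ 2 *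
        (log (1 + (1 + s - 1) ^ 2 * τ / ((1 + s) * (1 + τ) ^ 2)) / τ) := by
  have hsum : s / (1 + τ) + s * τ / (1 + τ) = s := by field_simp
  have harg : s / (1 + τ) * (s * τ / (1 + τ)) / (1 + s) =
      (1 + s - 1) ^ 2 * τ / ((1 + s) * (1 + τ) ^ 2) := by
    rw [add_sub_cancel_left]
    field_simp
  rw [planarDensity, add_assoc 1, hsum, harg]
  field_simp

lemma lintegral_planarDensity :
    ∫⁻ x in Ioi 0, ∫⁻ y in Ioi 0, ENNReal.ofReal (planarDensity x y) =
      ∫⁻ s in Ioi 0, ENNReal.ofReal (log (1 + s) ^ 3 / s ^ 2) := by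
  rw [lintegral_Ioi_Ioi_eq_lintegral_add_div (by unfold planarDensity; fun_prop)]
  refine setLIntegral_congr_fun measurableSet_Ioi fun s (hs : 0 < s) => ?_
  have hlog : 0 ≤ log (1 + s) / s ^ 2 := div_nonneg (log_nonneg (by linarith)) (by positivity)
  have hsplit : ∀ τ ∈ Ioi (0 : ℝ), ENNReal.ofReal (s / (1 + τ) ^ 2) *
        ENNReal.ofReal (planarDensity (s / (1 + τ)) (s * τ / (1 + τ))) =
      ENNReal.ofReal (log (1 + s) / s ^ 2) * ENNReal.ofReal
        (log (1 + (1 + s - 1) ^ 2 * τ / ((1 + s) * (1 + τ) ^ 2)) / τ) := fun τ hτ => by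
    rw [← ENNReal.ofReal_mul (by positivity), ← ENNReal.ofReal_mul hlog,
      mul_planarDensity_eq_mul_div hs hτ]
  rw [setLIntegral_congr_fun measurableSet_Ioi hsplit,
    lintegral_const_mul' _ _ ENNReal.ofReal_ne_top,
    lintegral_Ioi_log_one_add_mul_div (by linarith), ← ENNReal.ofReal_mul hlog]
  congr 1
  ring

end Wheel

lemma summable_one_div_nat_add_one_pow {k : ℕ} (hk : 1 < k) :
    Summable fun n : ℕ => 1 / ((n : ℝ) + 1) ^ k := by
  simpa using (summable_nat_add_iff 1).2 (summable_one_div_nat_pow.2 hk)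

/-- The integral of `1/det(X)²` over the positive orthant `(0,∞)⁵` is finite
and equals `6·ζ(3)`. -/
theorem integral_inv_det_sq_eq_six_zeta_three :
    IntegrableOn (fun x : Fin 5 → ℝ => ((wheel3Matrix x).det)⁻¹ ^ 2)
      {x | ∀ i, 0 < x i} ∧
    ∫ x in {x : Fin 5 → ℝ | ∀ i, 0 < x i}, ((wheel3Matrix x).det)⁻¹ ^ 2 =
      6 * ∑' n : ℕ, 1 / ((n : ℝ) + 1) ^ 3 := by
  have hzeta : ∑' n : ℕ, ENNReal.ofReal (3 ! / ((n : ℝ) + 1) ^ 3) =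
      ENNReal.ofReal (6 * ∑' n : ℕ, 1 / ((n : ℝ) + 1) ^ 3) := by
    rw [← tsum_mul_left, ENNReal.ofReal_tsum_of_nonneg (fun n => by positivity)
      ((summable_one_div_nat_add_one_pow (by norm_num)).mul_left 6)]
    norm_num [Nat.factorial, div_eq_mul_inv]
  refine integrable_and_integral_eq_of_lintegral_ofReal_eq
    (measurable_det_wheel3Matrix.inv.pow_const 2).aestronglyMeasurable
    (ae_of_all _ fun x => sq_nonneg _)
    (mul_nonneg (by norm_num) (tsum_nonneg fun n => by positivity)) ?_
  rw [lintegral_inv_det_sq_eq_planarDensity, lintegral_planarDensity,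
    lintegral_log_one_add_pow_div_sq, hzeta]
end

section
/- Let G be a finite connected simple graph with Kirchhoff graph polynomial Ψ_G, and let x : E(G) → ℝ satisfy x(e) ≥ 0 for every edge e. Then Ψ_G(x) ≥ 0, and Ψ_G(x) = 0 if and only if the simple graph on the same vertex type whose edge set is {e ∈ E(G) : x(e) = 0} is not acyclic, i.e. if and only if the set of edges on which x vanishes contains a cycle of G. -/
open scoped Classical

/-- The Kirchhoff graph polynomial: the sum over spanning trees `T` of `G` of the
product of `x e` over all edges `e` of `G` not in `T`. -/
noncomputable def kirchhoff {V : Type*} [Fintype V] (G : SimpleGraph V)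
    (x : G.edgeSet → ℝ) : ℝ :=
  ∑ T ∈ Finset.univ.filter (fun T : SimpleGraph V => T ≤ G ∧ T.IsTree),
    ∏ e : G.edgeSet, if (e : Sym2 V) ∈ T.edgeSet then 1 else x e

/-!
For nonnegative weights, the term of a spanning tree `T` is nonnegative, and it is nonzero exactly
when `T` contains every edge of weight zero. Nothing cancels in the sum, so the polynomial vanishes
exactly when no spanning tree contains all edges of weight zero. A set of edges of a connected graph
extends to a spanning tree if and only if it is acyclic.
-/

section SpanningTrees

variable {V : Type*} {G H : SimpleGraph V}

theorem exists_isTree_ge_iff_isAcyclic (hG : G.Connected) (hHG : H ≤ G) :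
    (∃ T ≤ G, T.IsTree ∧ H ≤ T) ↔ H.IsAcyclic := by
  constructor
  · rintro ⟨T, -, hT, hHT⟩
    exact hT.isAcyclic.anti hHT
  · intro hH
    obtain ⟨T, hHT, hTG, hT⟩ := hG.exists_isTree_le_of_le_of_isAcyclic hHG hH
    exact ⟨T, hTG, hT, hHT⟩

end SpanningTrees

section ZeroGraph

variable {V R : Type*} [Zero R] {G : SimpleGraph V}

/-- The spanning subgraph of `G` formed by the edges on which the edge weight `x` vanishes. It is a
graph on all of `V`, so that it can be compared with spanning trees by `≤`. -/
def zeroGraph (x : G.edgeSet → R) : SimpleGraph V :=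
  SimpleGraph.fromEdgeSet (Subtype.val '' {e : G.edgeSet | x e = 0})

theorem zeroGraph_le_iff {x : G.edgeSet → R} {H : SimpleGraph V} :
    zeroGraph x ≤ H ↔ ∀ e, x e = 0 → (e : Sym2 V) ∈ H.edgeSet := by
  have not_diag (e : G.edgeSet) : (e : Sym2 V) ∉ Sym2.diagSet :=
    G.edgeSet_subset_compl_diagSet e.2
  rw [zeroGraph, SimpleGraph.fromEdgeSet_le]
  constructor
  · exact fun h e he ↦ h ⟨⟨e, he, rfl⟩, not_diag e⟩
  · rintro h _ ⟨⟨e, he, rfl⟩, -⟩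
    exact h e he

theorem zeroGraph_le (x : G.edgeSet → R) : zeroGraph x ≤ G :=
  zeroGraph_le_iff.2 fun e _ ↦ e.2

end ZeroGraph

section ComplementWeight

variable {V R : Type*} {G : SimpleGraph V} [Fintype G.edgeSet]

/-- The product of the weights `x e` over the edges `e` of `G` outside `T`: the monomial that a
spanning tree `T` contributes to the Kirchhoff polynomial. It is defined for every graph `T` on `V`,
with the edges of `T` contributing a factor `1`. -/
noncomputable def complementWeight [CommMonoidWithZero R] (x : G.edgeSet → R)
    (T : SimpleGraph V) : R :=
  ∏ e : G.edgeSet, if (e : Sym2 V) ∈ T.edgeSet then 1 else x e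

theorem complementWeight_nonneg [CommMonoidWithZero R] [Preorder R] [ZeroLEOneClass R]
    [PosMulMono R] {x : G.edgeSet → R} (hx : ∀ e, 0 ≤ x e) (T : SimpleGraph V) :
    0 ≤ complementWeight x T := by
  refine Finset.prod_nonneg fun e _ ↦ ?_
  split_ifs
  exacts [zero_le_one, hx e]

theorem complementWeight_ne_zero_iff [CommMonoidWithZero R] [Nontrivial R] [NoZeroDivisors R]
    {x : G.edgeSet → R} {T : SimpleGraph V} :
    complementWeight x T ≠ 0 ↔ zeroGraph x ≤ T := by
  simp only [complementWeight, Finset.prod_ne_zero_iff, Finset.mem_univ, forall_const, ne_eq,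
    ite_eq_iff, one_ne_zero, and_false, false_or, not_and', not_not, zeroGraph_le_iff]

end ComplementWeight

section Kirchhoff

variable {V : Type*} [Fintype V] {G : SimpleGraph V} {x : G.edgeSet → ℝ}

theorem kirchhoff_eq_sum_complementWeight (x : G.edgeSet → ℝ) :
    kirchhoff G x = ∑ T with T ≤ G ∧ T.IsTree, complementWeight x T :=
  rfl

theorem kirchhoff_nonneg (hx : ∀ e, 0 ≤ x e) : 0 ≤ kirchhoff G x :=
  Finset.sum_nonneg fun T _ ↦ complementWeight_nonneg hx T

theorem kirchhoff_eq_zero_iff_not_exists_isTree (hx : ∀ e, 0 ≤ x e) :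
    kirchhoff G x = 0 ↔ ¬ ∃ T ≤ G, T.IsTree ∧ zeroGraph x ≤ T := by
  rw [kirchhoff_eq_sum_complementWeight,
    Finset.sum_eq_zero_iff_of_nonneg fun T _ ↦ complementWeight_nonneg hx T]
  simp only [Finset.mem_filter_univ, ← complementWeight_ne_zero_iff, not_exists, not_and, not_not,
    and_imp]

end Kirchhoff

/-- For a finite connected simple graph `G` and nonnegative `x : E(G) → ℝ`, the
Kirchhoff polynomial satisfies `Ψ_G(x) ≥ 0`, and `Ψ_G(x) = 0` if and only if the
simple graph on `V` whose edge set is `{e ∈ E(G) : x e = 0}` is not acyclic. -/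
theorem kirchhoff_nonneg_and_eq_zero_iff {V : Type*} [Fintype V]
    (G : SimpleGraph V) (hG : G.Connected)
    (x : G.edgeSet → ℝ) (hx : ∀ e, 0 ≤ x e) :
    0 ≤ kirchhoff G x ∧
      (kirchhoff G x = 0 ↔
        ¬ (SimpleGraph.fromEdgeSet
            (Subtype.val '' {e : G.edgeSet | x e = 0})).IsAcyclic) := by
  refine ⟨kirchhoff_nonneg hx, ?_⟩
  calc
    kirchhoff G x = 0 ↔ ¬ ∃ T ≤ G, T.IsTree ∧ zeroGraph x ≤ T :=
      kirchhoff_eq_zero_iff_not_exists_isTree hx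
    _ ↔ ¬ (zeroGraph x).IsAcyclic :=
      not_congr (exists_isTree_ge_iff_isAcyclic hG (zeroGraph_le x))
end

section
/- Let G be a finite connected simple graph with nonempty edge set E(G) satisfying |E(G)| = 2(|E(G)| − |V| + 1), and fix an edge e₀ ∈ E(G). For a nonempty subset F ⊆ E(G), let V_F be the set of endpoints of edges in F, let c_F be the number of connected components of the simple graph with vertex set V_F and edge set F, and set h_F = |F| − |V_F| + c_F. Then the function u ↦ Ψ_G(x_u)⁻² is Lebesgue integrable on the positive orthant of functions u : E(G) \ {e₀} → (0, ∞) (i.e. the Feynman residue of G is finite) if and only if every nonempty proper subset F ⊊ E(G) satisfies |F| > 2 · h_F. -/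
open MeasureTheory
open scoped Classical

/-- The affine chart `x(e₀) = 1`: extend `u : E \ {e₀} → ℝ` to `E → ℝ` by
sending `e₀` to `1`. -/
noncomputable def chart {V : Type*} [Fintype V] (G : SimpleGraph V) (e₀ : G.edgeSet)
    (u : {e : G.edgeSet // e ≠ e₀} → ℝ) : G.edgeSet → ℝ :=
  fun e => if h : e = e₀ then 1 else u ⟨e, h⟩

/-- The set of endpoints of the edges in `F`. -/
def edgeVerts {V : Type*} [Fintype V] (G : SimpleGraph V)
    (F : Finset G.edgeSet) : Set V :=
  {v | ∃ e ∈ F, v ∈ (e : Sym2 V)}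

/-- The simple graph on `V` whose edges are the edges in `F`. -/
def edgeGraph {V : Type*} [Fintype V] (G : SimpleGraph V)
    (F : Finset G.edgeSet) : SimpleGraph V :=
  SimpleGraph.fromEdgeSet (Subtype.val '' (F : Set G.edgeSet))

/-- The loop number `h_F = |F| − |V_F| + c_F` of the subgraph spanned by the
edge subset `F`, where `V_F` is the set of endpoints of edges of `F` and `c_F`
is the number of connected components of the graph `(V_F, F)`. -/
noncomputable def subLoopNumber {V : Type*} [Fintype V] (G : SimpleGraph V)
    (F : Finset G.edgeSet) : ℤ :=
  (F.card : ℤ) - Nat.card (edgeVerts G F) +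
    Nat.card ((edgeGraph G F).induce (edgeVerts G F)).ConnectedComponent

/-!
Kruskal's greedy algorithm produces, for every `x`, a spanning tree whose monomial in `Ψ_G`
dominates at `x` all monomials with exponents in the Newton polytope of `Ψ_G`; this is Abel
summation over the sublevel sets of `log x`. If `(1/s, …, 1/s)` is an interior point of the polytope
in the chart, then perturbing it coordinatewise bounds `Ψ_G⁻ˢ` by an integrable product of functions
of one variable. Otherwise it violates the strict form of an inequality of the polytope, say the one
of a set `S` of edges, and on boxes obtained by letting the variables of `S` tend jointly to `0` or
to `∞` the integral of `Ψ_G⁻ˢ` does not tend to `0`, although these boxes leave every compact set.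
For `|E| = s · h_G` the conditions at `0` on `S` and at `∞` on the complement of `S` coincide.
-/

section SpanningForest

variable {W : Type*} {T H : SimpleGraph W}

/-- `T` is a spanning forest of `H`: a maximal acyclic subgraph, maximality being expressed by
`T` connecting the same pairs of vertices as `H`. -/
structure IsSpanningForest (T H : SimpleGraph W) : Prop where
  le : T ≤ H
  isAcyclic : T.IsAcyclic
  reachable_eq : T.Reachable = H.Reachable

theorem exists_le_isSpanningForest {F : SimpleGraph W} (hFH : F ≤ H) (hF : F.IsAcyclic) :
    ∃ T, F ≤ T ∧ IsSpanningForest T H := by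
  obtain ⟨T, hFT, hTH, hT, hr⟩ :=
    SimpleGraph.exists_isAcyclic_reachable_eq_le_of_le_of_isAcyclic hFH hF
  exact ⟨T, hFT, hTH, hT, hr⟩

theorem isSpanningForest_of_isTree (hTH : T ≤ H) (hT : T.IsTree) : IsSpanningForest T H where
  le := hTH
  isAcyclic := hT.isAcyclic
  reachable_eq := by
    rw [T.preconnected_iff_reachable_eq_top.1 hT.preconnected,
      H.preconnected_iff_reachable_eq_top.1 (hT.preconnected.mono hTH)]

theorem sum_degree_connectedComponent [Fintype W] (c : H.ConnectedComponent) :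
    ∑ v : c, H.degree v = 2 * Nat.card c.toSimpleGraph.edgeSet := by
  rw [Nat.card_eq_fintype_card, ← SimpleGraph.edgeFinset_card,
    ← SimpleGraph.sum_degrees_eq_twice_card_edges]
  refine Finset.sum_congr rfl fun v _ => ?_
  have h : (H.induce c.supp).degree v = H.degree v :=
    SimpleGraph.degree_induce_of_neighborSet_subset fun w hw => c.mem_supp_of_adj_mem_supp v.2 hw
  rw [← h]
  congr!

theorem sum_connectedComponent_sum_supp [Fintype W] {M : Type*} [AddCommMonoid M] (f : W → M) :
    ∑ c : H.ConnectedComponent, ∑ v : c, f v = ∑ v, f v := by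
  rw [← Finset.sum_fiberwise Finset.univ H.connectedComponentMk f]
  exact Finset.sum_congr rfl fun c _ =>
    (Finset.sum_subtype _
      (fun v => (Finset.mem_filter_univ v).trans (c.mem_supp_iff v).symm) f).symm

theorem sum_card_edgeSet_connectedComponent [Fintype W] (H : SimpleGraph W) :
    ∑ c : H.ConnectedComponent, Nat.card c.toSimpleGraph.edgeSet = Nat.card H.edgeSet := by
  have h := sum_connectedComponent_sum_supp (H := H) fun v => H.degree v
  simp only [sum_degree_connectedComponent, ← Finset.mul_sum,
    H.sum_degrees_eq_twice_card_edges] at h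
  rw [Nat.card_eq_fintype_card, ← SimpleGraph.edgeFinset_card]
  exact mul_left_cancel₀ two_ne_zero h

theorem card_edgeSet_add_card_connectedComponent_of_isAcyclic [Finite W] (hT : T.IsAcyclic) :
    Nat.card T.edgeSet + Nat.card T.ConnectedComponent = Nat.card W := by
  have := Fintype.ofFinite W
  calc Nat.card T.edgeSet + Nat.card T.ConnectedComponent
      = ∑ c : T.ConnectedComponent, (Nat.card c.toSimpleGraph.edgeSet + 1) := by
        rw [Finset.sum_add_distrib, sum_card_edgeSet_connectedComponent, Finset.sum_const,
          smul_eq_mul, mul_one, Finset.card_univ, ← Nat.card_eq_fintype_card]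
    _ = ∑ c : T.ConnectedComponent, Nat.card c :=
        Finset.sum_congr rfl fun c _ =>
          (SimpleGraph.isTree_iff_connected_and_card.1 (hT.isTree_connectedComponent c)).2
    _ = Nat.card W := by
        simpa using sum_connectedComponent_sum_supp (H := T) fun _ => (1 : ℕ)

theorem reachable_induce_of_support_subset {A : Set W} (hA : H.support ⊆ A) {u v : W}
    (h : H.Reachable u v) (hu : u ∈ A) (hv : v ∈ A) :
    (H.induce A).Reachable ⟨u, hu⟩ ⟨v, hv⟩ := by
  obtain ⟨walk⟩ := h
  induction walk with
  | nil => exact .refl _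
  | @cons u w v hadj _ ih =>
    have hw : w ∈ A := hA (H.mem_support.2 ⟨u, hadj.symm⟩)
    have hstep : (H.induce A).Adj ⟨u, hu⟩ ⟨w, hw⟩ := hadj
    exact hstep.reachable.trans (ih hw hv)

namespace IsSpanningForest

theorem card_connectedComponent_eq (h : IsSpanningForest T H) :
    Nat.card T.ConnectedComponent = Nat.card H.ConnectedComponent :=
  congrArg (fun r => Nat.card (Quot r)) h.reachable_eq

theorem of_le {T' : SimpleGraph W} (h : IsSpanningForest T H) (hTT' : T ≤ T') (hT'H : T' ≤ H)
    (hT' : T'.IsAcyclic) : IsSpanningForest T' H where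
  le := hT'H
  isAcyclic := hT'
  reachable_eq := le_antisymm (fun _ _ huv => huv.mono hT'H)
    (h.reachable_eq ▸ fun _ _ huv => huv.mono hTT')

theorem induce (h : IsSpanningForest T H) {A : Set W} (hA : H.support ⊆ A) :
    IsSpanningForest (T.induce A) (H.induce A) where
  le := SimpleGraph.comap_monotone _ h.le
  isAcyclic := h.isAcyclic.induce A
  reachable_eq := by
    ext u v
    refine ⟨fun huv => huv.mono (SimpleGraph.comap_monotone _ h.le), fun huv => ?_⟩
    refine reachable_induce_of_support_subset ((SimpleGraph.support_mono h.le).trans hA) ?_ u.2 v.2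
    rw [h.reachable_eq]
    exact huv.map (SimpleGraph.Embedding.induce A).toHom

end IsSpanningForest

theorem card_connectedComponent_induce_add_card [Finite W] {A : Set W} (hA : H.support ⊆ A) :
    Nat.card (H.induce A).ConnectedComponent + Nat.card W =
      Nat.card H.ConnectedComponent + Nat.card A := by
  have := Fintype.ofFinite W
  obtain ⟨T, -, hT⟩ := exists_le_isSpanningForest bot_le SimpleGraph.isAcyclic_bot (H := H)
  have hTA := hT.induce hA
  have hW := card_edgeSet_add_card_connectedComponent_of_isAcyclic hT.isAcyclic
  have hcardA := card_edgeSet_add_card_connectedComponent_of_isAcyclic hTA.isAcyclic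
  have hedge : Nat.card (T.induce A).edgeSet = Nat.card T.edgeSet := by
    simpa only [SimpleGraph.edgeFinset_card, Nat.card_eq_fintype_card] using
      SimpleGraph.card_edgeFinset_induce_of_support_subset
        ((SimpleGraph.support_mono hT.le).trans hA)
  have hcomp := hT.card_connectedComponent_eq
  have hcompA := hTA.card_connectedComponent_eq
  lia

end SpanningForest

section LoopNumber

variable {V : Type*} [Fintype V] {G T : SimpleGraph V}

theorem edgeSet_edgeGraph (F : Finset G.edgeSet) :
    (edgeGraph G F).edgeSet = Subtype.val '' (F : Set G.edgeSet) := by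
  rw [edgeGraph, SimpleGraph.edgeSet_fromEdgeSet, sdiff_eq_left]
  refine Set.disjoint_left.2 ?_
  rintro _ ⟨e, -, rfl⟩
  exact G.not_isDiag_of_mem_edgeSet e.2

theorem edgeGraph_mono : Monotone (edgeGraph G) :=
  fun _ _ h => SimpleGraph.fromEdgeSet_mono (Set.image_mono (Finset.coe_subset.2 h))

theorem edgeGraph_univ : edgeGraph G Finset.univ = G :=
  SimpleGraph.edgeSet_injective (by simp [edgeSet_edgeGraph])

theorem support_edgeGraph_subset (F : Finset G.edgeSet) :
    (edgeGraph G F).support ⊆ edgeVerts G F := by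
  intro u hu
  obtain ⟨v, huv⟩ := (SimpleGraph.mem_support _).1 hu
  rw [← SimpleGraph.mem_edgeSet, edgeSet_edgeGraph] at huv
  obtain ⟨e, heF, he⟩ := huv
  exact ⟨e, heF, he ▸ Sym2.mem_mk_left u v⟩

theorem subLoopNumber_eq_card_sub_card_add (F : Finset G.edgeSet) :
    subLoopNumber G F =
      (F.card : ℤ) - Fintype.card V + Nat.card (edgeGraph G F).ConnectedComponent := by
  have h := card_connectedComponent_induce_add_card (support_edgeGraph_subset F)
  rw [subLoopNumber, ← Nat.card_eq_fintype_card (α := V)]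
  lia

theorem subLoopNumber_univ (hG : G.Connected) :
    subLoopNumber G Finset.univ = Fintype.card G.edgeSet - Fintype.card V + 1 := by
  have := hG.preconnected.subsingleton_connectedComponent
  have := hG.nonempty
  rw [subLoopNumber_eq_card_sub_card_add, edgeGraph_univ, Finset.card_univ,
    Nat.card_unique, Nat.cast_one]

/-- The complement of `T` in the edge set of `G`. When `T` is a spanning tree, its elements index
the variables of the monomial that `T` contributes to the Kirchhoff polynomial. -/
noncomputable def cotree (G T : SimpleGraph V) : Finset G.edgeSet :=
  {e | (e : Sym2 V) ∉ T.edgeSet}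

theorem mem_cotree {e : G.edgeSet} : e ∈ cotree G T ↔ (e : Sym2 V) ∉ T.edgeSet :=
  Finset.mem_filter_univ e

theorem card_edgeSet_inf_add_card_cotree_inter (T : SimpleGraph V) (F : Finset G.edgeSet) :
    Nat.card (T ⊓ edgeGraph G F).edgeSet + (cotree G T ∩ F).card = F.card := by
  have hT : (T ⊓ edgeGraph G F).edgeSet = Subtype.val '' (F \ cotree G T : Set G.edgeSet) := by
    rw [SimpleGraph.edgeSet_inf, edgeSet_edgeGraph]
    ext e
    simp only [Set.mem_inter_iff, Set.mem_image, Set.mem_sdiff, Finset.mem_coe, mem_cotree]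
    grind
  rw [hT, Nat.card_image_of_injective Subtype.val_injective, ← Finset.coe_sdiff,
    Nat.card_coe_set_eq, Set.ncard_coe_finset, Finset.inter_comm, Finset.card_sdiff_add_card_inter]

theorem subLoopNumber_le_card_cotree_inter (hT : T.IsAcyclic) (F : Finset G.edgeSet) :
    subLoopNumber G F ≤ (cotree G T ∩ F).card := by
  have hforest := card_edgeSet_add_card_connectedComponent_of_isAcyclic
    (hT.anti (inf_le_left : T ⊓ edgeGraph G F ≤ T))
  have hcomp := SimpleGraph.ConnectedComponent.card_le_card_of_le
    (inf_le_right : T ⊓ edgeGraph G F ≤ edgeGraph G F)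
  have hcard := card_edgeSet_inf_add_card_cotree_inter T F
  rw [subLoopNumber_eq_card_sub_card_add, ← Nat.card_eq_fintype_card (α := V)]
  lia

theorem subLoopNumber_empty_nonpos (G : SimpleGraph V) : subLoopNumber G ∅ ≤ 0 := by
  simpa only [Finset.inter_empty, Finset.card_empty, Nat.cast_zero] using
    subLoopNumber_le_card_cotree_inter (G := G) SimpleGraph.isAcyclic_bot ∅

theorem card_cotree_inter_eq_subLoopNumber {F : Finset G.edgeSet}
    (hT : IsSpanningForest (T ⊓ edgeGraph G F) (edgeGraph G F)) :
    ((cotree G T ∩ F).card : ℤ) = subLoopNumber G F := by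
  have hforest := card_edgeSet_add_card_connectedComponent_of_isAcyclic hT.isAcyclic
  have hcomp := hT.card_connectedComponent_eq
  have hcard := card_edgeSet_inf_add_card_cotree_inter T F
  rw [subLoopNumber_eq_card_sub_card_add, ← Nat.card_eq_fintype_card (α := V)]
  lia

theorem card_cotree_eq_subLoopNumber_univ (hTG : T ≤ G) (hT : T.IsTree) :
    ((cotree G T).card : ℤ) = subLoopNumber G Finset.univ := by
  have h : IsSpanningForest (T ⊓ edgeGraph G Finset.univ) (edgeGraph G Finset.univ) := by
    rw [edgeGraph_univ, inf_eq_left.2 hTG]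
    exact isSpanningForest_of_isTree hTG hT
  rw [← card_cotree_inter_eq_subLoopNumber h, Finset.inter_univ]

theorem card_cotree_inter_le (hTG : T ≤ G) (hT : T.IsTree) (F : Finset G.edgeSet) :
    ((cotree G T ∩ F).card : ℤ) ≤ subLoopNumber G Finset.univ - subLoopNumber G Fᶜ := by
  have hcompl := subLoopNumber_le_card_cotree_inter hT.isAcyclic Fᶜ
  have hsplit := Finset.card_inter_add_card_sdiff (cotree G T) F
  rw [Finset.sdiff_eq_inter_compl] at hsplit
  rw [← card_cotree_eq_subLoopNumber_univ hTG hT]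
  lia

end LoopNumber

section SublevelSets

variable {ι R : Type*} [Ring R] [LinearOrder R] [IsStrictOrderedRing R] {a y : ι → R}

theorem sum_mul_sub_nonneg_of_sublevel_sum_nonneg (S : Finset ι) {M : R}
    (hM : ∀ i ∈ S, y i ≤ M) (ha : ∀ c < M, 0 ≤ ∑ i ∈ S with y i ≤ c, a i) :
    0 ≤ ∑ i ∈ S, a i * (M - y i) := by
  induction S using Finset.induction_on_max_value y generalizing M with
  | empty => simp
  | insert j S hj hmax ih =>
    have hS : 0 ≤ ∑ i ∈ S, a i * (y j - y i) := by
      refine ih hmax fun c hc => ?_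
      have hcM := ha c (hc.trans_le (hM j (Finset.mem_insert_self j S)))
      rwa [Finset.filter_insert, if_neg hc.not_ge] at hcM
    have htop : 0 ≤ (∑ i ∈ insert j S, a i) * (M - y j) := by
      rcases (hM j (Finset.mem_insert_self j S)).eq_or_lt with hjM | hjM
      · simp [hjM]
      · have hcj := ha (y j) hjM
        rw [Finset.filter_true_of_mem fun i hi => ?_] at hcj
        · exact mul_nonneg hcj (sub_nonneg.2 hjM.le)
        · exact (Finset.mem_insert.1 hi).elim (fun h => h ▸ le_rfl) (hmax i)
    calc 0 ≤ (∑ i ∈ insert j S, a i) * (M - y j) + ∑ i ∈ insert j S, a i * (y j - y i) := by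
          rw [Finset.sum_insert (f := fun i => a i * (y j - y i)) hj, sub_self, mul_zero, zero_add]
          exact add_nonneg htop hS
      _ = ∑ i ∈ insert j S, a i * (M - y i) := by
          rw [Finset.sum_mul, ← Finset.sum_add_distrib]
          exact Finset.sum_congr rfl fun i _ => by rw [← mul_add, sub_add_sub_cancel]

theorem sum_mul_nonpos_of_sublevel_sum_nonneg [Fintype ι] (ha_univ : ∑ i, a i = 0)
    (ha : ∀ c, 0 ≤ ∑ i with y i ≤ c, a i) : ∑ i, a i * y i ≤ 0 := by
  obtain ⟨M, hM⟩ := (Set.finite_range y).bddAbove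
  have h := sum_mul_sub_nonneg_of_sublevel_sum_nonneg Finset.univ
    (fun i _ => hM (Set.mem_range_self i)) fun c _ => ha c
  simp only [mul_sub, Finset.sum_sub_distrib, ← Finset.sum_mul, ha_univ, zero_mul, zero_sub] at h
  exact neg_nonneg.1 h

end SublevelSets

section KirchhoffPolytope

variable {V : Type*} [Fintype V] {G : SimpleGraph V}

-- Kruskal's greedy algorithm: the edges are inserted in the order of increasing `y`.
theorem exists_isSpanningForest_forall_sublevel {α : Type*} [LinearOrder α] (y : G.edgeSet → α)
    (S : Finset G.edgeSet) :
    ∃ T, IsSpanningForest T (edgeGraph G S) ∧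
      ∀ c, IsSpanningForest (T ⊓ edgeGraph G {e ∈ S | y e ≤ c})
        (edgeGraph G {e ∈ S | y e ≤ c}) := by
  induction S using Finset.induction_on_max_value y with
  | empty =>
    obtain ⟨T, -, hT⟩ := exists_le_isSpanningForest bot_le SimpleGraph.isAcyclic_bot
      (H := edgeGraph G ∅)
    exact ⟨T, hT, fun c => by rwa [Finset.filter_empty, inf_eq_left.2 hT.le]⟩
  | insert a S _ hmax ih =>
    obtain ⟨T, hT, hTc⟩ := ih
    obtain ⟨T', hTT', hT'⟩ := exists_le_isSpanningForest
      (hT.le.trans (edgeGraph_mono (Finset.subset_insert a S))) hT.isAcyclic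
    refine ⟨T', hT', fun c => ?_⟩
    by_cases hac : y a ≤ c
    · rw [Finset.filter_true_of_mem fun e he => ?_, inf_eq_left.2 hT'.le]
      · exact hT'
      · exact (Finset.mem_insert.1 he).elim (fun h => h ▸ hac) fun h => (hmax e h).trans hac
    · rw [Finset.filter_insert, if_neg hac]
      exact (hTc c).of_le (inf_le_inf_right _ hTT') inf_le_right (hT'.isAcyclic.anti inf_le_left)

theorem exists_isTree_forall_card_cotree_inter_sublevel_eq (hG : G.Connected) {α : Type*}
    [LinearOrder α] (y : G.edgeSet → α) :
    ∃ T ≤ G, T.IsTree ∧ ∀ c, ((cotree G T ∩ ({e | y e ≤ c} : Finset G.edgeSet)).card : ℤ) =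
      subLoopNumber G {e | y e ≤ c} := by
  obtain ⟨T, hT, hTc⟩ := exists_isSpanningForest_forall_sublevel y Finset.univ
  rw [edgeGraph_univ] at hT
  have := hG.nonempty
  have hconn : T.Preconnected := by
    rw [SimpleGraph.preconnected_iff_reachable_eq_top, hT.reachable_eq]
    exact G.preconnected_iff_reachable_eq_top.1 hG.preconnected
  exact ⟨T, hT.le, ⟨⟨hconn⟩, hT.isAcyclic⟩, fun c => card_cotree_inter_eq_subLoopNumber (hTc c)⟩

/-- The Newton polytope of the Kirchhoff polynomial, that is, the convex hull of the indicators of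
the cotrees. It is encoded by inequalities, as the base polytope of the cographic matroid. -/
def kirchhoffPolytope (G : SimpleGraph V) : Set (G.edgeSet → ℝ) :=
  {p | ∑ e, p e = subLoopNumber G Finset.univ ∧ ∀ F, (subLoopNumber G F : ℝ) ≤ ∑ e ∈ F, p e}

theorem mem_kirchhoffPolytope_of_forall_notMem {p : G.edgeSet → ℝ} (e₀ : G.edgeSet)
    (hsum : ∑ e, p e = subLoopNumber G Finset.univ)
    (hp : ∀ S : Finset G.edgeSet, S.Nonempty → e₀ ∉ S → (subLoopNumber G S : ℝ) ≤ ∑ e ∈ S, p e ∧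
      ∑ e ∈ S, p e ≤ subLoopNumber G Finset.univ - subLoopNumber G Sᶜ) :
    p ∈ kirchhoffPolytope G := by
  refine ⟨hsum, fun F => ?_⟩
  by_cases he₀ : e₀ ∈ F
  · rcases Fᶜ.eq_empty_or_nonempty with hF | hF
    · rw [(Finset.compl_eq_empty_iff F).1 hF, hsum]
    · have hcompl := (hp Fᶜ hF (Finset.notMem_compl.2 he₀)).2
      rw [compl_compl, ← hsum, ← Finset.sum_add_sum_compl F] at hcompl
      linarith
  · rcases F.eq_empty_or_nonempty with rfl | hF
    · rw [Finset.sum_empty]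
      exact_mod_cast subLoopNumber_empty_nonpos G
    · exact (hp F hF he₀).1

theorem exists_isTree_sum_mul_le_sum_cotree (hG : G.Connected) {p : G.edgeSet → ℝ}
    (hp : p ∈ kirchhoffPolytope G) (y : G.edgeSet → ℝ) :
    ∃ T ≤ G, T.IsTree ∧ ∑ e, p e * y e ≤ ∑ e ∈ cotree G T, y e := by
  obtain ⟨T, hTG, hT, hTc⟩ := exists_isTree_forall_card_cotree_inter_sublevel_eq hG y
  refine ⟨T, hTG, hT, ?_⟩
  have hcount : ∀ F : Finset G.edgeSet,
      ∑ e ∈ F, (p e - if e ∈ cotree G T then 1 else 0) =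
        ∑ e ∈ F, p e - (cotree G T ∩ F).card := fun F => by
    rw [Finset.sum_sub_distrib, Finset.sum_boole, Finset.filter_mem_eq_inter, Finset.inter_comm]
  have hsum := sum_mul_nonpos_of_sublevel_sum_nonneg
    (a := fun e => p e - if e ∈ cotree G T then 1 else 0) (y := y) ?_ fun c => ?_
  · simp only [sub_mul, ite_mul, one_mul, zero_mul, Finset.sum_sub_distrib, Finset.sum_ite_mem,
      Finset.univ_inter] at hsum
    exact sub_nonpos.1 hsum
  · rw [hcount, hp.1, Finset.inter_univ, sub_eq_zero]
    exact_mod_cast (card_cotree_eq_subLoopNumber_univ hTG hT).symm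
  · have hF : ((cotree G T ∩ ({e | y e ≤ c} : Finset G.edgeSet)).card : ℝ) =
        subLoopNumber G {e | y e ≤ c} := by exact_mod_cast hTc c
    rw [hcount, hF]
    exact sub_nonneg.2 (hp.2 _)

end KirchhoffPolytope

section KirchhoffBounds

variable {V : Type*} [Fintype V] {G : SimpleGraph V} {x : G.edgeSet → ℝ}

theorem kirchhoff_eq_sum_prod_cotree (x : G.edgeSet → ℝ) :
    kirchhoff G x = ∑ T : SimpleGraph V with T ≤ G ∧ T.IsTree, ∏ e ∈ cotree G T, x e := by
  simp only [kirchhoff, cotree, Finset.prod_filter, ite_not]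

theorem prod_cotree_le_kirchhoff (hx : ∀ e, 0 ≤ x e) {T : SimpleGraph V} (hTG : T ≤ G)
    (hT : T.IsTree) : ∏ e ∈ cotree G T, x e ≤ kirchhoff G x := by
  rw [kirchhoff_eq_sum_prod_cotree]
  exact Finset.single_le_sum (f := fun T => ∏ e ∈ cotree G T, x e)
    (fun T _ => Finset.prod_nonneg fun e _ => hx e)
    (Finset.mem_filter.2 ⟨Finset.mem_univ T, hTG, hT⟩)

theorem kirchhoff_pos (hG : G.Connected) (hx : ∀ e, 0 < x e) : 0 < kirchhoff G x := by
  obtain ⟨T, hTG, hT⟩ := hG.exists_isTree_le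
  exact (Finset.prod_pos fun e _ => hx e).trans_le
    (prod_cotree_le_kirchhoff (fun e => (hx e).le) hTG hT)

theorem continuous_kirchhoff : Continuous (kirchhoff G) := by
  rw [funext kirchhoff_eq_sum_prod_cotree]
  fun_prop

theorem prod_rpow_le_kirchhoff (hG : G.Connected) (hx : ∀ e, 0 < x e) {p : G.edgeSet → ℝ}
    (hp : p ∈ kirchhoffPolytope G) : ∏ e, x e ^ p e ≤ kirchhoff G x := by
  obtain ⟨T, hTG, hT, hle⟩ := exists_isTree_sum_mul_le_sum_cotree hG hp fun e => Real.log (x e)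
  calc ∏ e, x e ^ p e = Real.exp (∑ e, p e * Real.log (x e)) := by
        rw [Real.exp_sum]
        exact Finset.prod_congr rfl fun e _ => by rw [Real.rpow_def_of_pos (hx e), mul_comm]
    _ ≤ Real.exp (∑ e ∈ cotree G T, Real.log (x e)) := Real.exp_le_exp.2 hle
    _ = ∏ e ∈ cotree G T, x e := by
        rw [Real.exp_sum]
        exact Finset.prod_congr rfl fun e _ => Real.exp_log (hx e)
    _ ≤ kirchhoff G x := prod_cotree_le_kirchhoff (fun e => (hx e).le) hTG hT

theorem kirchhoff_le_mul_of_forall_pow_le {c : G.edgeSet → ℝ} {S : Finset G.edgeSet} {t B : ℝ}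
    (hx : ∀ e, 0 ≤ x e) (hc : ∀ e, 0 ≤ c e) (hxc : ∀ e, x e ≤ c e * if e ∈ S then t else 1)
    (hB : ∀ T ≤ G, T.IsTree → t ^ (cotree G T ∩ S).card ≤ B) :
    kirchhoff G x ≤ kirchhoff G c * B := by
  rw [kirchhoff_eq_sum_prod_cotree, kirchhoff_eq_sum_prod_cotree, Finset.sum_mul]
  refine Finset.sum_le_sum fun T hT => ?_
  obtain ⟨hTG, hT⟩ := (Finset.mem_filter_univ T).1 hT
  calc ∏ e ∈ cotree G T, x e ≤ ∏ e ∈ cotree G T, c e * if e ∈ S then t else 1 :=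
        Finset.prod_le_prod (fun e _ => hx e) fun e _ => hxc e
    _ = (∏ e ∈ cotree G T, c e) * t ^ (cotree G T ∩ S).card := by
        rw [Finset.prod_mul_distrib, Finset.prod_ite_mem, Finset.prod_const]
    _ ≤ (∏ e ∈ cotree G T, c e) * B :=
        mul_le_mul_of_nonneg_left (hB T hTG hT) (Finset.prod_nonneg fun e _ => hc e)

end KirchhoffBounds

section OrthantIntegrals

variable {ι : Type*}

theorem integrableOn_Ioi_rpow_ite {a b : ℝ} (ha : -1 < a) (hb : b < -1) :
    IntegrableOn (fun t : ℝ => t ^ (if t ≤ 1 then a else b)) (Set.Ioi 0) := by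
  rw [← Set.Ioc_union_Ioi_eq_Ioi zero_le_one]
  refine IntegrableOn.union ?_ ?_
  · refine IntegrableOn.congr_fun ?_ (fun t ht => by rw [if_pos ht.2]) measurableSet_Ioc
    exact (intervalIntegrable_iff_integrableOn_Ioc_of_le zero_le_one).1
      (intervalIntegral.intervalIntegrable_rpow' ha)
  · refine IntegrableOn.congr_fun ?_ (fun t ht => by rw [if_neg (not_le.2 ht)]) measurableSet_Ioi
    exact integrableOn_Ioi_rpow_of_lt hb one_pos

theorem setOf_forall_pos_eq_pi :
    {u : ι → ℝ | ∀ i, 0 < u i} = Set.univ.pi fun _ => Set.Ioi 0 := by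
  ext u
  simp only [Set.mem_ofPred_eq, Set.mem_univ_pi, Set.mem_Ioi]

theorem measurableSet_setOf_forall_pos [Countable ι] :
    MeasurableSet {u : ι → ℝ | ∀ i, 0 < u i} := by
  rw [setOf_forall_pos_eq_pi]
  exact MeasurableSet.univ_pi fun _ => measurableSet_Ioi

theorem integrableOn_prod_setOf_forall_pos [Fintype ι] {g : ℝ → ℝ}
    (hg : IntegrableOn g (Set.Ioi 0)) :
    IntegrableOn (fun u : ι → ℝ => ∏ i, g (u i)) {u | ∀ i, 0 < u i} := by
  rw [setOf_forall_pos_eq_pi, IntegrableOn, volume_pi, Measure.restrict_pi_pi]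
  exact Integrable.fintype_prod fun _ => hg

-- Perturbing the exponent `s⁻¹` downwards where `u i ≤ 1` and upwards where `1 < u i` makes the
-- resulting product of one-variable bounds integrable both at `0` and at `∞`.
theorem integrableOn_inv_rpow_of_eventually_prod_rpow_le [Fintype ι]
    {f : (ι → ℝ) → ℝ} (hf : Measurable f) {s : ℝ} (hs : 0 < s)
    (hle : ∀ᶠ q in nhds fun _ => s⁻¹, ∀ u, (∀ i, 0 < u i) → ∏ i, u i ^ q i ≤ f u) :
    IntegrableOn (fun u => (f u)⁻¹ ^ s) {u | ∀ i, 0 < u i} := by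
  obtain ⟨ε, hε, hball⟩ := Metric.nhds_basis_closedBall.eventually_iff.1 hle
  have hsε : 0 < s * ε := mul_pos hs hε
  refine (integrableOn_prod_setOf_forall_pos (integrableOn_Ioi_rpow_ite
    (a := -1 + s * ε) (b := -1 - s * ε) (by linarith) (by linarith))).mono'
    (hf.inv.pow_const s).aestronglyMeasurable ?_
  filter_upwards [ae_restrict_mem measurableSet_setOf_forall_pos] with u hu
  set q : ι → ℝ := fun i => if u i ≤ 1 then s⁻¹ - ε else s⁻¹ + ε with hqdef
  have hprod : 0 < ∏ i, u i ^ q i := Finset.prod_pos fun i _ => Real.rpow_pos_of_pos (hu i) _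
  have hfu : ∏ i, u i ^ q i ≤ f u := by
    refine hball ((dist_pi_le_iff hε.le).2 fun i => ?_) u hu
    simp only [hqdef, Real.dist_eq]
    split_ifs <;> simp [abs_of_pos hε]
  rw [Real.norm_of_nonneg (Real.rpow_nonneg (inv_nonneg.2 (hprod.le.trans hfu)) s)]
  calc (f u)⁻¹ ^ s ≤ (∏ i, u i ^ q i)⁻¹ ^ s :=
        Real.rpow_le_rpow (inv_nonneg.2 (hprod.le.trans hfu)) (inv_anti₀ hprod hfu) hs.le
    _ = ∏ i, u i ^ (-(s * q i)) := by
        rw [← Finset.prod_inv_distrib, ← Real.finsetProd_rpow _ _ fun i _ =>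
          inv_nonneg.2 (Real.rpow_nonneg (hu i).le _)]
        refine Finset.prod_congr rfl fun i _ => ?_
        rw [← Real.rpow_neg (hu i).le, ← Real.rpow_mul (hu i).le, neg_mul, mul_comm]
    _ = ∏ i, u i ^ (if u i ≤ 1 then -1 + s * ε else -1 - s * ε) := by
        refine Finset.prod_congr rfl fun i _ => ?_
        congr 1
        simp only [hqdef]
        split_ifs <;> field_simp <;> ring

/-- The box of all `u` with `t < u i ≤ 2 * t` for `i ∈ S` and `1 < u i ≤ 2` for `i ∉ S`, on which
a homogeneous scaling of the variables in `S` is tested. -/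
noncomputable def scaledBox (S : Finset ι) (t : ℝ) : Set (ι → ℝ) :=
  Set.univ.pi fun i => Set.Ioc (if i ∈ S then t else 1) (2 * if i ∈ S then t else 1)

variable {S : Finset ι} {t : ℝ}

theorem measurableSet_scaledBox [Countable ι] : MeasurableSet (scaledBox S t) :=
  MeasurableSet.univ_pi fun _ => measurableSet_Ioc

theorem scaledBox_subset_setOf_forall_pos (ht : 0 < t) : scaledBox S t ⊆ {u | ∀ i, 0 < u i} :=
  fun _ hu i =>
    (by split_ifs <;> positivity : (0 : ℝ) < if i ∈ S then t else 1).trans (hu i trivial).1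

variable [Fintype ι]

theorem volume_real_scaledBox (ht : 0 ≤ t) : volume.real (scaledBox S t) = t ^ S.card := by
  have hside : ∀ i, 0 ≤ if i ∈ S then t else 1 := fun i => by split_ifs <;> positivity
  rw [scaledBox, Measure.real, Real.volume_pi_Ioc_toReal fun i => by linarith [hside i]]
  simp only [two_mul, add_sub_cancel_right, Finset.prod_ite_mem, Finset.univ_inter,
    Finset.prod_const]

theorem volume_scaledBox_ne_top : volume (scaledBox S t) ≠ ⊤ := by
  rw [scaledBox, Real.volume_pi_Ioc]
  exact ENNReal.prod_ne_top fun _ _ => ENNReal.ofReal_ne_top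

-- The boxes escape to the boundary of the orthant, so they would have to carry a vanishing
-- fraction of a finite integral.
theorem tendsto_setIntegral_scaledBox {f : (ι → ℝ) → ℝ}
    (hf : IntegrableOn f {u | ∀ i, 0 < u i}) (hS : S.Nonempty) {l : Filter ℝ}
    [l.IsCountablyGenerated] (hpos : ∀ᶠ t in l, 0 < t)
    (hescape : ∀ x > 0, ∀ᶠ t in l, x ∉ Set.Ioc t (2 * t)) :
    Filter.Tendsto (fun t => ∫ u in scaledBox S t, f u) l (nhds 0) := by
  have hbox : ∀ t, ∫ u in {u : ι → ℝ | ∀ i, 0 < u i}, (scaledBox S t).indicator f u =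
      ∫ u in {u | ∀ i, 0 < u i} ∩ scaledBox S t, f u :=
    fun t => setIntegral_indicator measurableSet_scaledBox
  have htend : Filter.Tendsto
      (fun t => ∫ u in {u : ι → ℝ | ∀ i, 0 < u i}, (scaledBox S t).indicator f u) l
      (nhds (∫ _ in {u : ι → ℝ | ∀ i, 0 < u i}, 0)) := by
    refine tendsto_integral_filter_of_dominated_convergence (fun u => ‖f u‖)
      (.of_forall fun t => hf.aestronglyMeasurable.indicator measurableSet_scaledBox)
      (.of_forall fun t => .of_forall fun u => norm_indicator_le_norm_self f u) hf.norm ?_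
    obtain ⟨i, hi⟩ := hS
    filter_upwards [ae_restrict_mem measurableSet_setOf_forall_pos] with u hu
    refine Filter.Tendsto.congr' ?_ tendsto_const_nhds
    filter_upwards [hescape (u i) (hu i)] with t ht
    refine (Set.indicator_of_notMem (fun hut => ht ?_) f).symm
    simpa only [hi, if_true] using hut i trivial
  rw [integral_zero] at htend
  refine htend.congr' ?_
  filter_upwards [hpos] with t ht
  rw [hbox, Set.inter_eq_right.2 (scaledBox_subset_setOf_forall_pos ht)]

theorem not_integrableOn_of_forall_scaledBox_le {f : (ι → ℝ) → ℝ} (hS : S.Nonempty)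
    {l : Filter ℝ} [l.NeBot] [l.IsCountablyGenerated] (hpos : ∀ᶠ t in l, 0 < t)
    (hescape : ∀ x > 0, ∀ᶠ t in l, x ∉ Set.Ioc t (2 * t)) {c : ℝ} (hc : 0 < c)
    (hf : ∀ᶠ t in l, ∀ u ∈ scaledBox S t, c ≤ f u * t ^ S.card) :
    ¬IntegrableOn f {u | ∀ i, 0 < u i} := fun hint => by
  refine hc.not_ge (ge_of_tendsto (tendsto_setIntegral_scaledBox hint hS hpos hescape) ?_)
  filter_upwards [hpos, hf] with t ht hft
  have hpow : 0 < t ^ S.card := pow_pos ht _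
  calc c = c / t ^ S.card * volume.real (scaledBox S t) := by
        rw [volume_real_scaledBox ht.le, div_mul_cancel₀ c hpow.ne']
    _ ≤ ∫ u in scaledBox S t, f u :=
        setIntegral_ge_of_const_le_real measurableSet_scaledBox volume_scaledBox_ne_top
          (fun u hu => (div_le_iff₀ hpow).2 (hft u hu))
          (hint.mono_set (scaledBox_subset_setOf_forall_pos ht))

theorem eventually_nhdsGT_notMem_Ioc {x : ℝ} (hx : 0 < x) :
    ∀ᶠ t in nhdsWithin 0 (Set.Ioi 0), x ∉ Set.Ioc t (2 * t) := by
  filter_upwards [Ioo_mem_nhdsGT (half_pos hx)] with t ht hxt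
  linarith [ht.2, hxt.2]

theorem eventually_atTop_notMem_Ioc (x : ℝ) : ∀ᶠ t in Filter.atTop, x ∉ Set.Ioc t (2 * t) := by
  filter_upwards [Filter.eventually_ge_atTop x] with t ht hxt
  exact hxt.1.not_ge ht

end OrthantIntegrals

section Chart

variable {V : Type*} [Fintype V] {G : SimpleGraph V} {e₀ : G.edgeSet}

theorem chart_self (u : {e : G.edgeSet // e ≠ e₀} → ℝ) : chart G e₀ u e₀ = 1 :=
  dif_pos rfl

theorem chart_coe (u : {e : G.edgeSet // e ≠ e₀} → ℝ) (i : {e : G.edgeSet // e ≠ e₀}) :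
    chart G e₀ u i = u i :=
  dif_neg i.2

theorem continuous_chart : Continuous (chart G e₀) :=
  continuous_pi fun e => by
    by_cases h : e = e₀
    · simpa only [chart, h, dif_pos] using continuous_const
    · simpa only [chart, h, dif_neg, not_false_iff] using continuous_apply _

theorem chart_pos {u : {e : G.edgeSet // e ≠ e₀} → ℝ} (hu : ∀ i, 0 < u i) (e : G.edgeSet) :
    0 < chart G e₀ u e := by
  rw [chart]
  split_ifs with h
  exacts [one_pos, hu ⟨e, h⟩]

/-- Extension of a family `q` of exponents for the chart variables to the exponents of a monomial
that is homogeneous of the same degree `h_G` as the Kirchhoff polynomial. -/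
noncomputable def homogenizeExponent (e₀ : G.edgeSet) (q : {e : G.edgeSet // e ≠ e₀} → ℝ)
    (e : G.edgeSet) : ℝ :=
  if h : e = e₀ then subLoopNumber G Finset.univ - ∑ i, q i else q ⟨e, h⟩

theorem homogenizeExponent_coe (q : {e : G.edgeSet // e ≠ e₀} → ℝ)
    (i : {e : G.edgeSet // e ≠ e₀}) : homogenizeExponent e₀ q i = q i :=
  dif_neg i.2

theorem sum_homogenizeExponent (q : {e : G.edgeSet // e ≠ e₀} → ℝ) :
    ∑ e, homogenizeExponent e₀ q e = subLoopNumber G Finset.univ := by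
  rw [Fintype.sum_eq_add_sum_subtype_ne _ e₀]
  simp only [homogenizeExponent_coe]
  rw [homogenizeExponent, dif_pos rfl, sub_add_cancel]

theorem sum_homogenizeExponent_of_notMem {S : Finset G.edgeSet} (hS : e₀ ∉ S)
    (q : {e : G.edgeSet // e ≠ e₀} → ℝ) :
    ∑ e ∈ S, homogenizeExponent e₀ q e = ∑ i ∈ S.subtype (· ≠ e₀), q i := by
  rw [← Finset.sum_subtype_of_mem _ fun e he => ne_of_mem_of_not_mem he hS]
  exact Finset.sum_congr rfl fun i _ => homogenizeExponent_coe q i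

theorem prod_chart_rpow_homogenizeExponent (u q : {e : G.edgeSet // e ≠ e₀} → ℝ) :
    ∏ e, chart G e₀ u e ^ homogenizeExponent e₀ q e = ∏ i, u i ^ q i := by
  rw [Fintype.prod_eq_mul_prod_subtype_ne _ e₀, chart_self, Real.one_rpow, one_mul]
  simp only [chart_coe, homogenizeExponent_coe]

theorem card_subtype_ne_of_notMem {α : Type*} {a : α} [DecidablePred (· ≠ a)] {S : Finset α}
    (hS : a ∉ S) :
    (S.subtype (· ≠ a)).card = S.card := by
  rw [Finset.card_subtype, Finset.filter_true_of_mem fun x hx => ne_of_mem_of_not_mem hx hS]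

theorem eventually_homogenizeExponent_mem_kirchhoffPolytope {m : ℝ}
    (hm : ∀ S : Finset G.edgeSet, S.Nonempty → e₀ ∉ S → (subLoopNumber G S : ℝ) < S.card * m ∧
      S.card * m < subLoopNumber G Finset.univ - subLoopNumber G Sᶜ) :
    ∀ᶠ q in nhds fun _ => m, homogenizeExponent e₀ q ∈ kirchhoffPolytope G := by
  have hsums : ∀ S : Finset G.edgeSet, ∀ᶠ q in nhds (fun _ : {e : G.edgeSet // e ≠ e₀} => m),
      S.Nonempty → e₀ ∉ S → (subLoopNumber G S : ℝ) ≤ ∑ e ∈ S, homogenizeExponent e₀ q e ∧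
        ∑ e ∈ S, homogenizeExponent e₀ q e ≤
          subLoopNumber G Finset.univ - subLoopNumber G Sᶜ := by
    intro S
    by_cases h : S.Nonempty ∧ e₀ ∉ S
    · have htend : Filter.Tendsto (fun q => ∑ e ∈ S, homogenizeExponent e₀ q e)
          (nhds fun _ : {e : G.edgeSet // e ≠ e₀} => m) (nhds (S.card * m)) := by
        have hcont : Continuous fun q : {e : G.edgeSet // e ≠ e₀} → ℝ =>
            ∑ i ∈ S.subtype (· ≠ e₀), q i := by fun_prop
        simpa only [sum_homogenizeExponent_of_notMem h.2, Finset.sum_const,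
          card_subtype_ne_of_notMem h.2, nsmul_eq_mul] using hcont.tendsto fun _ => m
      obtain ⟨hlt, hgt⟩ := hm S h.1 h.2
      filter_upwards [htend.eventually_const_le hlt, htend.eventually_le_const hgt]
        with q hle hge _ _ using ⟨hle, hge⟩
    · exact .of_forall fun q hS he₀ => absurd ⟨hS, he₀⟩ h
  filter_upwards [Filter.eventually_all.2 hsums] with q hq
  exact mem_kirchhoffPolytope_of_forall_notMem e₀ (sum_homogenizeExponent q) hq

theorem integrableOn_kirchhoff_chart_inv_rpow (hG : G.Connected) {s : ℝ} (hs : 0 < s)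
    (h : ∀ S : Finset G.edgeSet, S.Nonempty → e₀ ∉ S → s * subLoopNumber G S < S.card ∧
      S.card < s * (subLoopNumber G Finset.univ - subLoopNumber G Sᶜ)) :
    IntegrableOn (fun u => (kirchhoff G (chart G e₀ u))⁻¹ ^ s) {u | ∀ e, 0 < u e} := by
  refine integrableOn_inv_rpow_of_eventually_prod_rpow_le
    (continuous_kirchhoff.comp continuous_chart).measurable hs ?_
  have hinterior : ∀ S : Finset G.edgeSet, S.Nonempty → e₀ ∉ S →
      (subLoopNumber G S : ℝ) < S.card * s⁻¹ ∧
        S.card * s⁻¹ < subLoopNumber G Finset.univ - subLoopNumber G Sᶜ := by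
    simpa only [← div_eq_mul_inv, lt_div_iff₀' hs, div_lt_iff₀' hs] using h
  filter_upwards [eventually_homogenizeExponent_mem_kirchhoffPolytope hinterior] with q hq u hu
  rw [← prod_chart_rpow_homogenizeExponent]
  exact prod_rpow_le_kirchhoff hG (chart_pos hu) hq

theorem chart_le_of_mem_scaledBox {S : Finset G.edgeSet} (hS : e₀ ∉ S) {t : ℝ}
    {u : {e : G.edgeSet // e ≠ e₀} → ℝ} (hu : u ∈ scaledBox (S.subtype (· ≠ e₀)) t)
    (e : G.edgeSet) : chart G e₀ u e ≤ 2 * if e ∈ S then t else 1 := by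
  by_cases he : e = e₀
  · rw [he, chart_self, if_neg hS]
    norm_num
  · simpa only [chart_coe, Finset.mem_subtype] using
      (chart_coe u ⟨e, he⟩).trans_le (hu ⟨e, he⟩ trivial).2

theorem le_kirchhoff_chart_inv_rpow_mul (hG : G.Connected) {s : ℝ} (hs : 0 < s)
    {S : Finset G.edgeSet} (hS : e₀ ∉ S) {t : ℝ} (ht : 0 < t)
    (htree : ∀ T ≤ G, T.IsTree → t ^ (cotree G T ∩ S).card ≤ t ^ (S.card / s : ℝ))
    {u : {e : G.edgeSet // e ≠ e₀} → ℝ} (hu : u ∈ scaledBox (S.subtype (· ≠ e₀)) t) :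
    (kirchhoff G fun _ => 2)⁻¹ ^ s ≤ (kirchhoff G (chart G e₀ u))⁻¹ ^ s * t ^ S.card := by
  have hpos := chart_pos (scaledBox_subset_setOf_forall_pos ht hu)
  have hle : kirchhoff G (chart G e₀ u) ≤ kirchhoff G (fun _ => 2) * t ^ (S.card / s : ℝ) :=
    kirchhoff_le_mul_of_forall_pow_le (fun e => (hpos e).le) (fun _ => zero_le_two)
      (chart_le_of_mem_scaledBox hS hu) htree
  have hΨ : 0 < kirchhoff G (chart G e₀ u) := kirchhoff_pos hG hpos
  have htwo : 0 < kirchhoff G fun _ => 2 := kirchhoff_pos hG fun _ => two_pos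
  have hpow : t ^ S.card = (t ^ (S.card / s : ℝ)) ^ s := by
    rw [← Real.rpow_mul ht.le, div_mul_cancel₀ _ hs.ne', Real.rpow_natCast]
  rw [hpow, ← Real.mul_rpow (inv_nonneg.2 hΨ.le) (Real.rpow_nonneg ht.le _)]
  refine Real.rpow_le_rpow (inv_nonneg.2 htwo.le) ?_ hs.le
  rw [inv_le_iff_one_le_mul₀ htwo, mul_right_comm, mul_assoc, inv_mul_eq_div, one_le_div hΨ]
  exact hle

theorem not_integrableOn_kirchhoff_chart_inv_rpow (hG : G.Connected) {s : ℝ} (hs : 0 < s)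
    {S : Finset G.edgeSet} (hS : S.Nonempty) (he₀ : e₀ ∉ S) {l : Filter ℝ} [l.NeBot]
    [l.IsCountablyGenerated] (hpos : ∀ᶠ t in l, 0 < t)
    (hescape : ∀ x > 0, ∀ᶠ t in l, x ∉ Set.Ioc t (2 * t))
    (htree : ∀ᶠ t in l, ∀ T ≤ G, T.IsTree →
      t ^ (cotree G T ∩ S).card ≤ t ^ (S.card / s : ℝ)) :
    ¬IntegrableOn (fun u => (kirchhoff G (chart G e₀ u))⁻¹ ^ s) {u | ∀ e, 0 < u e} := by
  have hcard := card_subtype_ne_of_notMem he₀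
  have hS' : (S.subtype (· ≠ e₀)).Nonempty := by
    rwa [← Finset.card_pos, hcard, Finset.card_pos]
  refine not_integrableOn_of_forall_scaledBox_le hS' hpos hescape
    (Real.rpow_pos_of_pos (inv_pos.2 (kirchhoff_pos hG fun _ => two_pos)) s) ?_
  filter_upwards [hpos, htree] with t ht htreet u hu
  rw [hcard]
  exact le_kirchhoff_chart_inv_rpow_mul hG hs he₀ ht htreet hu

theorem not_integrableOn_of_card_le_mul_subLoopNumber (hG : G.Connected) {s : ℝ} (hs : 0 < s)
    {S : Finset G.edgeSet} (hS : S.Nonempty) (he₀ : e₀ ∉ S) (h : S.card ≤ s * subLoopNumber G S) :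
    ¬IntegrableOn (fun u => (kirchhoff G (chart G e₀ u))⁻¹ ^ s) {u | ∀ e, 0 < u e} := by
  refine not_integrableOn_kirchhoff_chart_inv_rpow hG hs hS he₀
    (l := nhdsWithin 0 (Set.Ioi 0)) self_mem_nhdsWithin
    (fun x hx => eventually_nhdsGT_notMem_Ioc hx) ?_
  filter_upwards [Ioo_mem_nhdsGT one_pos] with t ht T _ hT
  have hcotree : (subLoopNumber G S : ℝ) ≤ (cotree G T ∩ S).card := by
    exact_mod_cast subLoopNumber_le_card_cotree_inter hT.isAcyclic S
  rw [← Real.rpow_natCast]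
  exact Real.rpow_le_rpow_of_exponent_ge ht.1 ht.2.le (((div_le_iff₀' hs).2 h).trans hcotree)

theorem not_integrableOn_of_mul_subLoopNumber_sub_le_card (hG : G.Connected) {s : ℝ} (hs : 0 < s)
    {S : Finset G.edgeSet} (hS : S.Nonempty) (he₀ : e₀ ∉ S)
    (h : s * (subLoopNumber G Finset.univ - subLoopNumber G Sᶜ) ≤ S.card) :
    ¬IntegrableOn (fun u => (kirchhoff G (chart G e₀ u))⁻¹ ^ s) {u | ∀ e, 0 < u e} := by
  refine not_integrableOn_kirchhoff_chart_inv_rpow hG hs hS he₀ (Filter.eventually_gt_atTop 0)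
    (fun x _ => eventually_atTop_notMem_Ioc x) ?_
  filter_upwards [Filter.eventually_ge_atTop 1] with t ht T hTG hT
  have hcotree : ((cotree G T ∩ S).card : ℝ) ≤
      subLoopNumber G Finset.univ - subLoopNumber G Sᶜ := by
    exact_mod_cast card_cotree_inter_le hTG hT S
  rw [← Real.rpow_natCast]
  exact Real.rpow_le_rpow_of_exponent_le ht (hcotree.trans ((le_div_iff₀' hs).2 h))

end Chart

-- `h_S` and `h_G - h_{Sᶜ}` are the least and the greatest number of edges of `S` outside a spanning
-- tree of `G`, so the two inequalities are convergence for `x(e) → 0` and for `x(e) → ∞`, `e ∈ S`.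
theorem feynmanResidue_finite_iff_subdivergenceFree_general {V : Type*} [Fintype V]
    (G : SimpleGraph V) (hG : G.Connected) (e₀ : G.edgeSet) {s : ℝ} (hs : 0 < s) :
    IntegrableOn (fun u : {e : G.edgeSet // e ≠ e₀} → ℝ =>
        (kirchhoff G (chart G e₀ u))⁻¹ ^ s) {u | ∀ e, 0 < u e} ↔
      ∀ S : Finset G.edgeSet, S.Nonempty → e₀ ∉ S →
        s * subLoopNumber G S < S.card ∧
          S.card < s * (subLoopNumber G Finset.univ - subLoopNumber G Sᶜ) := by
  refine ⟨fun hint S hS he₀ => ⟨?_, ?_⟩, integrableOn_kirchhoff_chart_inv_rpow hG hs⟩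
  · by_contra! h
    exact not_integrableOn_of_card_le_mul_subLoopNumber hG hs hS he₀ h hint
  · by_contra! h
    exact not_integrableOn_of_mul_subLoopNumber_sub_le_card hG hs hS he₀ h hint

theorem powerCounting_iff_of_card_eq_mul_subLoopNumber {V : Type*} [Fintype V]
    {G : SimpleGraph V} (e₀ : G.edgeSet) {s : ℝ}
    (hlog : (Fintype.card G.edgeSet : ℝ) = s * subLoopNumber G Finset.univ) :
    (∀ S : Finset G.edgeSet, S.Nonempty → e₀ ∉ S →
        s * subLoopNumber G S < S.card ∧
          S.card < s * (subLoopNumber G Finset.univ - subLoopNumber G Sᶜ)) ↔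
      ∀ F : Finset G.edgeSet, F.Nonempty → F ≠ Finset.univ →
        s * subLoopNumber G F < F.card := by
  have hcompl : ∀ S : Finset G.edgeSet,
      S.card < s * (subLoopNumber G Finset.univ - subLoopNumber G Sᶜ) ↔
        s * subLoopNumber G Sᶜ < Sᶜ.card := fun S => by
    rw [mul_sub, ← hlog, ← Finset.card_add_card_compl S, Nat.cast_add]
    constructor <;> intro h <;> linarith
  simp only [hcompl]
  refine ⟨fun h F hF hFuniv => ?_, fun h S hS he₀ => ⟨h S hS ?_, h Sᶜ ?_ ?_⟩⟩
  · by_cases he₀ : e₀ ∈ F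
    · have hFcompl : Fᶜ.Nonempty :=
        Finset.nonempty_iff_ne_empty.2 (mt (Finset.compl_eq_empty_iff F).1 hFuniv)
      simpa only [compl_compl] using (h Fᶜ hFcompl (Finset.notMem_compl.2 he₀)).2
    · exact (h F hF he₀).1
  · exact fun hSuniv => he₀ (hSuniv ▸ Finset.mem_univ e₀)
  · exact ⟨e₀, Finset.mem_compl.2 he₀⟩
  · exact (Finset.compl_ne_univ_iff_nonempty S).2 hS

/-- The Feynman residue of a connected graph `G` with `|E| = 2h_G` is finite if
and only if `G` is free of divergent subgraphs, i.e. every nonempty proper edge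
subset `F` satisfies `|F| > 2·h_F`. -/
theorem feynmanResidue_finite_iff_subdivergenceFree {V : Type*} [Fintype V]
    (G : SimpleGraph V) (hG : G.Connected) (hE : Nonempty G.edgeSet)
    (hlog : (Fintype.card G.edgeSet : ℤ) =
      2 * ((Fintype.card G.edgeSet : ℤ) - Fintype.card V + 1))
    (e₀ : G.edgeSet) :
    IntegrableOn (fun u : {e : G.edgeSet // e ≠ e₀} → ℝ =>
        (kirchhoff G (chart G e₀ u))⁻¹ ^ 2) {u | ∀ e, 0 < u e} ↔
      ∀ F : Finset G.edgeSet, F.Nonempty → F ≠ Finset.univ →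
        2 * subLoopNumber G F < (F.card : ℤ) := by
  have hlogReal : (Fintype.card G.edgeSet : ℝ) = 2 * subLoopNumber G Finset.univ := by
    rw [subLoopNumber_univ hG]
    exact_mod_cast hlog
  have h := (feynmanResidue_finite_iff_subdivergenceFree_general G hG e₀ two_pos).trans
    (powerCounting_iff_of_card_eq_mul_subLoopNumber e₀ hlogReal)
  simp only [Real.rpow_two] at h
  exact_mod_cast h
end
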